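/- Let R be a Noetherian local ring with infinite residue field, and let I be an R-ideal of height g ≥ 1 generated by a regular sequence. Then for every j ≥ 1, core(I^j) = I^{gj−g+1}. If moreover R is Gorenstein, then γ(I^j) equals the binomial coefficient C(gj−1, g−1). -/

import Mathlib

open IsLocalRing

universe u v

namespace CPU

section Defs

variable {R : Type u} [CommRing R]

/-- The minimal number of generators of a submodule, as an extended natural number. -/
noncomputable def muE {M : Type v} [AddCommGroup M] [Module R M] (N : Submodule R M) : ℕ∞ :=
  sInf {n : ℕ∞ | ∃ s : Finset M, (s.card : ℕ∞) = n ∧ Submodule.span R (s : Set M) = N}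

/-- The Krull dimension of a ring, valued in `WithBot ℕ∞`. -/
noncomputable def rDim (S : Type v) [CommRing S] : WithBot ℕ∞ :=
  ringKrullDim S

/-- `J` is a reduction of `I`. -/
def IsReduction (J I : Ideal R) : Prop :=
  J ≤ I ∧ ∃ r : ℕ, I ^ (r + 1) = J * I ^ r

/-- `J` is a minimal reduction of `I`. -/
def IsMinimalReduction (J I : Ideal R) : Prop :=
  IsReduction J I ∧ ∀ J' : Ideal R, IsReduction J' I → J' ≤ J → J' = J

/-- The core of an ideal: the intersection of all of its minimal reductions. -/
noncomputable def core (I : Ideal R) : Ideal R :=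
  sInf {J : Ideal R | IsMinimalReduction J I}

/-- The reduction number of `I`. -/
noncomputable def reductionNumber (I : Ideal R) : ℕ∞ :=
  sInf {n : ℕ∞ | ∃ r : ℕ, (r : ℕ∞) = n ∧ ∃ J : Ideal R,
    IsMinimalReduction J I ∧ I ^ (r + 1) = J * I ^ r}

/-- `γ(I)`: the least number of minimal reductions whose intersection is the core. -/
noncomputable def gamma (I : Ideal R) : ℕ∞ :=
  sInf {n : ℕ∞ | ∃ t : ℕ, (t : ℕ∞) = n ∧ ∃ Js : Fin t → Ideal R,
    (∀ i, IsMinimalReduction (Js i) I) ∧ core I = ⨅ i, Js i}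

/-- The height of an ideal. -/
noncomputable def ht (I : Ideal R) : WithBot ℕ∞ :=
  ⨅ (p : PrimeSpectrum R) (_ : I ≤ p.asIdeal),
    rDim (Localization.AtPrime p.asIdeal)

/-- The Krull dimension of the special fiber ring of `I`,
i.e. the analytic spread of `I`. -/
noncomputable def fiberDim [IsLocalRing R] (I : Ideal R) : WithBot ℕ∞ :=
  rDim (↥(reesAlgebra I) ⧸
    (Ideal.map (algebraMap R ↥(reesAlgebra I)) (maximalIdeal R)))

/-- The condition `G_s`. -/
def Gcond (I : Ideal R) (s : ℕ) : Prop :=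
  ∀ p : PrimeSpectrum R, I ≤ p.asIdeal →
    rDim (Localization.AtPrime p.asIdeal) < (s : WithBot ℕ∞) →
    (muE (Ideal.map (algebraMap R (Localization.AtPrime p.asIdeal)) I) : WithBot ℕ∞) ≤
      rDim (Localization.AtPrime p.asIdeal)

/-- Depth of a module over a local ring, via lengths of regular sequences in the
maximal ideal. -/
noncomputable def mDepth (R : Type u) [CommRing R] [IsLocalRing R]
    (M : Type v) [AddCommGroup M] [Module R M] : ℕ∞ :=
  sSup {n : ℕ∞ | ∃ rs : List R, (∀ x ∈ rs, x ∈ maximalIdeal R) ∧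
    RingTheory.Sequence.IsRegular M rs ∧ (rs.length : ℕ∞) = n}

/-- Depth of the quotient `R/K` of a local ring `R`. -/
noncomputable def qDepth (R : Type u) [CommRing R] [IsLocalRing R] (K : Ideal R) : ℕ∞ :=
  mDepth R (R ⧸ K)

/-- The socle of `R/K`, for `R` local. -/
noncomputable def socle (R : Type u) [CommRing R] [IsLocalRing R] (K : Ideal R) :
    Ideal (R ⧸ K) :=
  Submodule.colon (⊥ : Ideal (R ⧸ K)) (Ideal.map (Ideal.Quotient.mk K) (maximalIdeal R))

/-- The Cohen–Macaulay type of the quotient `R/K` of a local ring `R`. -/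
noncomputable def qType (R : Type u) [CommRing R] [IsLocalRing R] (K : Ideal R) : ℕ∞ :=
  sInf {n : ℕ∞ | ∃ rs : List R, (∀ x ∈ rs, x ∈ maximalIdeal R) ∧
    RingTheory.Sequence.IsRegular (R ⧸ K) rs ∧ (rs.length : ℕ∞) = qDepth R K ∧
    muE (socle R (K ⊔ Ideal.ofList rs)) = n}

/-- Cohen–Macaulayness for a quotient `R/K` of a local ring `R`. -/
def IsCMQuot (R : Type u) [CommRing R] [IsLocalRing R] (K : Ideal R) : Prop :=
  rDim (R ⧸ K) = (qDepth R K : WithBot ℕ∞)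

/-- A Cohen–Macaulay local ring: depth equals Krull dimension. -/
def IsCMLocalRing (R : Type u) [CommRing R] [IsLocalRing R] : Prop :=
  rDim R = (qDepth R (⊥ : Ideal R) : WithBot ℕ∞)

/-- A Gorenstein local ring: Cohen–Macaulay of type one. -/
def IsGorensteinLocalRing (R : Type u) [CommRing R] [IsLocalRing R] : Prop :=
  IsCMLocalRing R ∧ qType R (⊥ : Ideal R) = 1

/-- Gorensteinness of the quotient ring `R/K` of a local ring. -/
def IsGorQuot (R : Type u) [CommRing R] [IsLocalRing R] (K : Ideal R) : Prop :=
  IsCMQuot R K ∧ qType R K = 1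

/-- A regular local ring: the maximal ideal is generated by `dim R` elements. -/
def IsRegularLocal (R : Type u) [CommRing R] [IsLocalRing R] : Prop :=
  IsNoetherianRing R ∧ (muE (maximalIdeal R) : WithBot ℕ∞) = rDim R

/-- Serre's condition `S₂` for the quotient ring `R/K`. -/
def QuotS2 (K : Ideal R) : Prop :=
  ∀ (q : Ideal R) (hq : q.IsPrime), K ≤ q →
    letI := hq
    min 2 (rDim ((Localization.AtPrime q) ⧸
        (Ideal.map (algebraMap R (Localization.AtPrime q)) K)))
      ≤ (qDepth (Localization.AtPrime q)
          (Ideal.map (algebraMap R (Localization.AtPrime q)) K) : WithBot ℕ∞)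

/-- `K` is an `s`-residual intersection of `I`. -/
def IsResidualIntersection (I K : Ideal R) (s : ℕ) : Prop :=
  K ≠ ⊤ ∧ ht I ≤ (s : WithBot ℕ∞) ∧ (s : WithBot ℕ∞) ≤ ht K ∧
    ∃ a : Ideal R, a ≤ I ∧ (∃ f : Finset R, f.card ≤ s ∧ Ideal.span (f : Set R) = a) ∧
      K = Submodule.colon a I

/-- `K` is a geometric `s`-residual intersection of `I`. -/
def IsGeometricRI (I K : Ideal R) (s : ℕ) : Prop :=
  IsResidualIntersection I K s ∧ (s : WithBot ℕ∞) + 1 ≤ ht (I ⊔ K)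

/-- `I` is weakly `s`-residually `S₂`. -/
def WeaklyResS2 (I : Ideal R) (s : ℕ) : Prop :=
  ∀ i ≤ s, ∀ K : Ideal R, IsGeometricRI I K i → QuotS2 K

/-- The condition `AN_s` for `I`. -/
def ANcond [IsLocalRing R] (I : Ideal R) (s : ℕ) : Prop :=
  ∀ i ≤ s, ∀ K : Ideal R, IsResidualIntersection I K i → IsCMQuot R K

/-- The condition `AN_s⁻` for `I`. -/
def ANminus [IsLocalRing R] (I : Ideal R) (s : ℕ) : Prop :=
  ∀ i ≤ s, ∀ K : Ideal R, IsGeometricRI I K i → IsCMQuot R K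

/-- `I` is universally weakly `s`-residually `S₂`: for every finite set of
variables, the extension of `I` to `R(x₁, …, x_n)` is weakly `s`-residually `S₂`. -/
def UnivWeaklyResS2 [IsLocalRing R] (I : Ideal R) (s : ℕ) : Prop :=
  ∀ (n : ℕ)
    (hP : (Ideal.map (MvPolynomial.C (σ := Fin n)) (maximalIdeal R)).IsPrime),
    letI := hP
    WeaklyResS2 (Ideal.map
      ((algebraMap (MvPolynomial (Fin n) R)
        (Localization.AtPrime
          (Ideal.map (MvPolynomial.C (σ := Fin n)) (maximalIdeal R)))).comp
        (MvPolynomial.C)) I) s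

/-- The `j`-th Fitting ideal of (the module) `I`. -/
noncomputable def fittingIdeal (I : Ideal R) (j : ℕ) : Ideal R :=
  ⨆ (n : ℕ) (π : (Fin n → R) →ₗ[R] R) (_ : LinearMap.range π = I),
    Ideal.span {d : R | ∃ (v : Fin (n - j) → (Fin n → R)) (r : Fin (n - j) → Fin n),
      (∀ k, π (v k) = 0) ∧ d = Matrix.det (Matrix.of fun i k => v k (r i))}

/-- The set `Q(I)` of primes containing `Fitt_ℓ(I)` at which `R` has dimension `ℓ`
and `I` has analytic spread `ℓ`. -/
def QSet [IsLocalRing R] (I : Ideal R) (l : ℕ) : Set (PrimeSpectrum R) :=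
  {p | fittingIdeal I l ≤ p.asIdeal ∧
    rDim (Localization.AtPrime p.asIdeal) = (l : WithBot ℕ∞) ∧
    fiberDim (Ideal.map (algebraMap R (Localization.AtPrime p.asIdeal)) I)
      = (l : WithBot ℕ∞)}

/-- An ideal is integrally closed if it admits no larger ideal of which it is a
reduction. -/
def IsIntClosedIdeal (I : Ideal R) : Prop :=
  ∀ J : Ideal R, IsReduction I J → J = I

/-- A normal ideal: all powers are integrally closed. -/
def IsNormalIdeal (I : Ideal R) : Prop :=
  ∀ j : ℕ, IsIntClosedIdeal (I ^ j)

/-- `φ` is a presentation matrix of the ideal `I` (with `n = μ(I)` rows). -/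
def Presents {n m : ℕ} (φ : Matrix (Fin n) (Fin m) R) (I : Ideal R) : Prop :=
  muE I = (n : ℕ∞) ∧ ∃ π : (Fin n → R) →ₗ[R] R, LinearMap.range π = I ∧
    LinearMap.range (Matrix.toLin' φ) = LinearMap.ker π

/-- The ideal of `t × t` minors of a matrix. -/
noncomputable def minorsIdeal {n m : ℕ} (t : ℕ) (φ : Matrix (Fin n) (Fin m) R) : Ideal R :=
  Ideal.span {d : R | ∃ (r : Fin t → Fin n) (c : Fin t → Fin m),
    d = (φ.submatrix r c).det}

/-- The grade of an ideal: the supremum of lengths of regular sequences contained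
in it. -/
noncomputable def grade (I : Ideal R) : ℕ∞ :=
  sSup {n : ℕ∞ | ∃ rs : List R, (∀ x ∈ rs, x ∈ I) ∧
    RingTheory.Sequence.IsRegular R rs ∧ (rs.length : ℕ∞) = n}

end Defs

/-- `M` has projective dimension at most `n` over `R`. -/
def ProjDimLE (R : Type u) [CommRing R] :
    (n : ℕ) → (M : Type u) → [AddCommGroup M] → [Module R M] → Prop
  | 0, M, _, _ => Module.Projective R M
  | n + 1, M, _, _ => ∃ (k : ℕ) (f : (Fin k → R) →ₗ[R] M), Function.Surjective f ∧
      ProjDimLE R n ↥(LinearMap.ker f)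

section Defs2

variable {R : Type u} [CommRing R]

/-- `M` has projective dimension exactly `n` over `R`. -/
def ProjDimEq (R : Type u) [CommRing R] (M : Type u) [AddCommGroup M] [Module R M]
    (n : ℕ) : Prop :=
  ProjDimLE R n M ∧ ∀ m : ℕ, ProjDimLE R m M → n ≤ m

/-- A perfect ideal: the projective dimension of `R/I` equals the grade of `I`. -/
def IsPerfectIdeal (I : Ideal R) : Prop :=
  ∃ g : ℕ, grade I = (g : ℕ∞) ∧ ProjDimEq R (R ⧸ I) g

/-- The multiplicative set which is the complement of the union of the associated
primes of `R/H`. -/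
def assComplement (H : Ideal R) : Submonoid R where
  carrier := {r : R | ∀ p ∈ associatedPrimes R (R ⧸ H), r ∉ p}
  one_mem' := fun p hp => (Ideal.ne_top_iff_one p).mp hp.1.ne_top
  mul_mem' := fun {a b} ha hb p hp hab =>
    (hp.1.mem_or_mem hab).elim (ha p hp) (hb p hp)

/-- The `j`-th symbolic power of `H`. -/
noncomputable def symbolicPower (H : Ideal R) (j : ℕ) : Ideal R :=
  Ideal.comap (algebraMap R (Localization (assComplement H)))
    (Ideal.map (algebraMap R (Localization (assComplement H))) (H ^ j))

/-- Serre's condition `S₂` for a module. -/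
def ModuleS2 (S : Type u) [CommRing S] (M : Type v) [AddCommGroup M] [Module S M] : Prop :=
  ∀ (q : Ideal S) (hq : q.IsPrime),
    letI := hq
    min 2 (rDim ((Localization.AtPrime q) ⧸
        (Module.annihilator (Localization.AtPrime q) (LocalizedModule q.primeCompl M))))
      ≤ (mDepth (Localization.AtPrime q) (LocalizedModule q.primeCompl M) : WithBot ℕ∞)

/-- `M` is a maximal Cohen–Macaulay `S`-module. -/
def IsMCM (S : Type u) [CommRing S] (M : Type v) [AddCommGroup M] [Module S M] : Prop :=
  ∀ (q : Ideal S) (hq : q.IsMaximal),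
    letI := hq.isPrime
    (mDepth (Localization.AtPrime q) (LocalizedModule q.primeCompl M) : WithBot ℕ∞) =
      rDim (Localization.AtPrime q)

end Defs2

/-!
Write `I = (x_1, …, x_g)` with `x` a regular sequence, `j = s + 1`, and let `k` be the residue
field. A regular sequence is quasi-regular, so `I ^ d / m I ^ d` is the space of forms of degree `d`
over `k`, and a minimal reduction of `I ^ (s + 1)` can be studied through the ideal generated by its
forms of degree `s + 1`.

For any reduction `J`, this ideal contains a power of the variables, so prime avoidance over
the infinite field `k` gives a regular sequence of `g` forms of degree `s + 1` in it. The complete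
intersection which they define has Hilbert series `(1 + t + ⋯ + t ^ s) ^ g`, of degree `g s` with
leading coefficient `1`. Hence `I ^ (g s + 1) ≤ J`, and `I ^ (g s) ≤ J + (δ)` for a single `δ`.

Conversely, consider the reductions generated by `y_i ^ s (y_i - c_i y_{i-1})`, where `y` is a
permutation of `x`. Modulo such a reduction, a monomial of degree `g s` is a multiple of
`∏ y_i ^ s`, by a monomial in `c` if its exponents satisfy a ballot condition and by `0` otherwise.
As `y` and `c` vary these coefficient vectors span `k ^ N`, where `N = C(g s + g - 1, g - 1)` is the
number of monomials of degree `g s`, so the intersection of `N` of these reductions is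
`I ^ (g s + 1)`. Fewer than `N` reductions never suffice: by the first part, each imposes only one
linear condition on the coefficients of a form of degree `g s`.
-/

section RegularFamilies

open RingTheory.Sequence

lemma ofFn_perm_map_finRange_erase_append {α : Type*} {g : ℕ} (y : Fin g → α) (i : Fin g) :
    (List.ofFn y).Perm (((List.finRange g).erase i).map y ++ [y i]) := by
  rw [List.ofFn_eq_map]
  exact ((List.perm_cons_erase (List.mem_finRange i)).map y).trans
    (List.perm_append_singleton _ _).symm

lemma image_update_compl_singleton {ι α : Type*} [DecidableEq ι] (y : ι → α) (i : ι) (a : α) :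
    Function.update y i a '' {i}ᶜ = y '' {i}ᶜ :=
  Set.image_congr fun _ hk => Function.update_of_ne hk _ _

lemma map_update_finRange_erase {α : Type*} {g : ℕ} (y : Fin g → α) (i : Fin g) (a : α) :
    ((List.finRange g).erase i).map (Function.update y i a) =
      ((List.finRange g).erase i).map y :=
  List.map_congr_left fun _ hk =>
    Function.update_of_ne ((List.nodup_finRange g).mem_erase_iff.1 hk).1 _ _

lemma pow_mem_subsemigroup {M : Type*} [Monoid M] {S : Subsemigroup M} {a : M} (ha : a ∈ S)
    {n : ℕ} (hn : n ≠ 0) : a ^ n ∈ S := by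
  induction n, Nat.one_le_iff_ne_zero.2 hn using Nat.le_induction with
  | base => rwa [pow_one]
  | succ m hm ih => rw [pow_succ]; exact S.mul_mem (ih (Nat.one_le_iff_ne_zero.1 hm)) ha

variable {R : Type u} [CommRing R]

/-- A finite family is regular if each member is a nonzerodivisor modulo its predecessors. The
quotient by the whole family is allowed to vanish. -/
def IsRegularFamily {g : ℕ} (y : Fin g → R) : Prop := IsWeaklyRegular R (List.ofFn y)

lemma isSMulRegular_quotient_smul_top_iff (J : Ideal R) (r : R) :
    IsSMulRegular (R ⧸ (J • ⊤ : Submodule R R)) r ↔ ∀ a, r * a ∈ J → a ∈ J := by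
  rw [smul_eq_mul, Ideal.mul_top, isSMulRegular_quotient_iff_mem_of_smul_mem]
  rfl

lemma isWeaklyRegular_append_singleton_iff (l : List R) (r : R) :
    IsWeaklyRegular R (l ++ [r]) ↔
      IsWeaklyRegular R l ∧ ∀ a, r * a ∈ Ideal.ofList l → a ∈ Ideal.ofList l := by
  rw [isWeaklyRegular_append_iff, isWeaklyRegular_singleton_iff,
    isSMulRegular_quotient_smul_top_iff]

lemma ofList_take_ofFn {g : ℕ} (y : Fin g → R) (i : Fin g) :
    Ideal.ofList ((List.ofFn y).take i) = Ideal.span (y '' Set.Iio i) := by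
  refine congrArg Ideal.span (Set.ext fun a => ?_)
  simp only [Set.mem_ofPred_eq, List.mem_take_iff_getElem, Set.mem_image, Set.mem_Iio,
    List.getElem_ofFn, List.length_ofFn, lt_min_iff]
  constructor
  · rintro ⟨k, hk, rfl⟩
    exact ⟨⟨k, hk.2⟩, Fin.lt_def.2 hk.1, rfl⟩
  · rintro ⟨k, hk, rfl⟩
    exact ⟨k, ⟨hk, k.2⟩, rfl⟩

lemma isRegularFamily_iff {g : ℕ} (y : Fin g → R) :
    IsRegularFamily y ↔
      ∀ i a, y i * a ∈ Ideal.span (y '' Set.Iio i) → a ∈ Ideal.span (y '' Set.Iio i) := by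
  have key (i : Fin g) : IsSMulRegular
        (R ⧸ (Ideal.ofList ((List.ofFn y).take i) • ⊤ : Submodule R R)) (y i) ↔
      ∀ a, y i * a ∈ Ideal.span (y '' Set.Iio i) → a ∈ Ideal.span (y '' Set.Iio i) := by
    rw [isSMulRegular_quotient_smul_top_iff, ofList_take_ofFn]
  unfold IsRegularFamily
  rw [isWeaklyRegular_iff]
  constructor
  · intro h i
    have hi := h i (by simp)
    rw [List.getElem_ofFn] at hi
    exact (key i).1 hi
  · intro h i hi
    rw [List.length_ofFn] at hi
    simpa only [List.getElem_ofFn] using (key ⟨i, hi⟩).2 (h _)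

lemma span_image_eq_of_sub_mem_span_Iio {g : ℕ} {x y : Fin g → R}
    (hy : ∀ i, y i - x i ∈ Ideal.span (x '' Set.Iio i)) {T : Set (Fin g)} (hT : IsLowerSet T) :
    Ideal.span (y '' T) = Ideal.span (x '' T) := by
  have mem_span_Iic (k : Fin g) : x k ∈ Ideal.span (y '' Set.Iic k) := by
    induction k using WellFoundedLT.induction with
    | _ k ih =>
      have hlt : Ideal.span (x '' Set.Iio k) ≤ Ideal.span (y '' Set.Iic k) := by
        rw [Ideal.span_le]
        rintro _ ⟨l, hl, rfl⟩
        exact Ideal.span_mono (Set.image_mono (Set.Iic_subset_Iic.2 (le_of_lt hl))) (ih l hl)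
      have hyk : y k ∈ Ideal.span (y '' Set.Iic k) :=
        Ideal.subset_span (Set.mem_image_of_mem y Set.self_mem_Iic)
      simpa using Ideal.sub_mem _ hyk (hlt (hy k))
  apply le_antisymm <;> rw [Ideal.span_le] <;> rintro _ ⟨k, hk, rfl⟩
  · have hlt : y k - x k ∈ Ideal.span (x '' T) :=
      Ideal.span_mono (Set.image_mono fun l hl => hT (le_of_lt hl) hk) (hy k)
    simpa using Ideal.add_mem _ hlt (Ideal.subset_span (Set.mem_image_of_mem x hk))
  · exact Ideal.span_mono (Set.image_mono fun l hl => hT hl hk) (mem_span_Iic k)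

lemma IsRegularFamily.of_sub_mem_span_Iio {g : ℕ} {x y : Fin g → R} (h : IsRegularFamily x)
    (hy : ∀ i, y i - x i ∈ Ideal.span (x '' Set.Iio i)) : IsRegularFamily y := by
  rw [isRegularFamily_iff] at h ⊢
  intro i a ha
  rw [span_image_eq_of_sub_mem_span_Iio hy (isLowerSet_Iio i)] at ha ⊢
  refine h i a ?_
  convert Ideal.sub_mem _ ha (Ideal.mul_mem_right a _ (hy i)) using 1
  ring

/-- If `u i` may be cancelled modulo the ideals generated by any mixture of the other `v k` and
`u k * v k`, then all `u i` may be cancelled at once. -/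
lemma mem_span_of_mul_prod_mem_span {ι : Type*} [Fintype ι] (u v : ι → R)
    (h : ∀ i, ∀ y : ι → R, (∀ k, y k = v k ∨ y k = u k * v k) →
      ∀ a, u i * a ∈ Ideal.span (y '' {i}ᶜ) → a ∈ Ideal.span (y '' {i}ᶜ))
    {a : R} (ha : a * ∏ i, u i ∈ Ideal.span (Set.range fun i => u i * v i)) :
    a ∈ Ideal.span (Set.range v) := by
  classical
  suffices H : ∀ T : Finset ι, ∀ a : R,
      a * ∏ i ∈ T, u i ∈ Ideal.span (Set.range fun i => if i ∈ T then u i * v i else v i) →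
      a ∈ Ideal.span (Set.range v) from H Finset.univ a (by simpa using ha)
  clear ha a
  intro T
  induction T using Finset.induction_on with
  | empty => intro a ha; simpa using ha
  | insert i T hi ih =>
    intro a ha
    apply ih
    set y : ι → R := fun k => if k ∈ insert i T then u k * v k else v k with hy
    set z : ι → R := fun k => if k ∈ T then u k * v k else v k with hz
    have hyi : y i = u i * v i := by simp [hy]
    have hrange : Set.range y = insert (y i) (y '' {i}ᶜ) := by
      rw [← Set.image_univ, ← Set.image_insert_eq]
      congr 1
      ext k; simp [em]
    rw [hrange, Ideal.mem_span_insert, Finset.prod_insert hi, hyi] at ha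
    obtain ⟨b, c, hc, e⟩ := ha
    have hcancel : a * ∏ k ∈ T, u k - b * v i ∈ Ideal.span (y '' {i}ᶜ) := by
      refine h i y (fun k => by simp only [hy]; split_ifs <;> simp) _ ?_
      convert hc using 1
      linear_combination e
    have hsub : y '' {i}ᶜ ⊆ Set.range z := by
      rintro _ ⟨k, hk, rfl⟩
      exact ⟨k, by simp [hy, hz, show k ≠ i from hk]⟩
    have hvi : v i ∈ Ideal.span (Set.range z) := Ideal.subset_span ⟨i, by simp [hz, hi]⟩
    simpa using Ideal.add_mem _ (Ideal.span_mono hsub hcancel) (Ideal.mul_mem_left _ b hvi)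

lemma ofList_map_finRange_erase {g : ℕ} (y : Fin g → R) (i : Fin g) :
    Ideal.ofList (((List.finRange g).erase i).map y) = Ideal.span (y '' {i}ᶜ) := by
  refine congrArg Ideal.span (Set.ext fun a => ?_)
  simp [(List.nodup_finRange g).mem_erase_iff]

lemma update_mem {ι : Type*} [DecidableEq ι] {J : Ideal R} {y : ι → R} (hy : ∀ i, y i ∈ J) (i : ι)
    {a : R} (ha : a ∈ J) (k : ι) : Function.update y i a k ∈ J :=
  (Function.forall_update_iff y fun _ b => b ∈ J).2 ⟨ha, fun k _ => hy k⟩ k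

lemma mem_of_mem_subsemigroup_closure {J : Ideal R} {S : Set R} (hS : S ⊆ J) {z : R}
    (hz : z ∈ Subsemigroup.closure S) : z ∈ J := by
  induction hz using Subsemigroup.closure_induction with
  | mem z hz => exact hS hz
  | mul a b _ _ ha _ => exact Ideal.mul_mem_right _ _ ha

variable [IsLocalRing R] [IsNoetherianRing R] {g : ℕ} {y : Fin g → R}

lemma IsRegularFamily.comp_perm (h : IsRegularFamily y) (hy : ∀ i, y i ∈ maximalIdeal R)
    (σ : Equiv.Perm (Fin g)) : IsRegularFamily (y ∘ σ) :=
  isWeaklyRegular_of_perm_of_subset_maximalIdeal h (Equiv.Perm.ofFn_comp_perm σ y).symm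
    (by simpa [List.mem_ofFn] using hy)

lemma isRegularFamily_iff_erase (hy : ∀ i, y i ∈ maximalIdeal R) (i : Fin g) :
    IsRegularFamily y ↔ IsWeaklyRegular R (((List.finRange g).erase i).map y) ∧
      ∀ a, y i * a ∈ Ideal.span (y '' {i}ᶜ) → a ∈ Ideal.span (y '' {i}ᶜ) := by
  have hperm := ofFn_perm_map_finRange_erase_append y i
  have hmem : ∀ r ∈ List.ofFn y, r ∈ maximalIdeal R := by simpa [List.mem_ofFn] using hy
  rw [← ofList_map_finRange_erase, ← isWeaklyRegular_append_singleton_iff]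
  exact ⟨fun h => isWeaklyRegular_of_perm_of_subset_maximalIdeal h hperm hmem,
    fun h => isWeaklyRegular_of_perm_of_subset_maximalIdeal h hperm.symm
      fun r hr => hmem r (hperm.mem_iff.2 hr)⟩

lemma IsRegularFamily.update_mul (hy : ∀ i, y i ∈ maximalIdeal R) (i : Fin g) {a b : R}
    (ha : a ∈ maximalIdeal R) (hb : b ∈ maximalIdeal R)
    (hya : IsRegularFamily (Function.update y i a))
    (hyb : IsRegularFamily (Function.update y i b)) :
    IsRegularFamily (Function.update y i (a * b)) := by
  rw [isRegularFamily_iff_erase (update_mem hy i ha) i] at hya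
  rw [isRegularFamily_iff_erase (update_mem hy i hb) i] at hyb
  rw [isRegularFamily_iff_erase (update_mem hy i (Ideal.mul_mem_right b _ ha)) i]
  simp only [image_update_compl_singleton, map_update_finRange_erase, Function.update_self]
    at hya hyb ⊢
  refine ⟨hya.1, fun c hc => hyb.2 _ (hya.2 _ ?_)⟩
  rwa [← mul_assoc]

lemma isRegularFamily_update_of_mem_closure {S : Set R} (hS : S ⊆ maximalIdeal R)
    (hy : ∀ i, y i ∈ maximalIdeal R) (i : Fin g)
    (h : ∀ z ∈ S, IsRegularFamily (Function.update y i z)) {z : R}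
    (hz : z ∈ Subsemigroup.closure S) : IsRegularFamily (Function.update y i z) := by
  induction hz using Subsemigroup.closure_induction with
  | mem z hz => exact h z hz
  | mul a b ha hb iha ihb =>
    exact .update_mul hy i (mem_of_mem_subsemigroup_closure hS ha)
      (mem_of_mem_subsemigroup_closure hS hb) iha ihb

lemma isRegularFamily_of_forall_mem_closure {P : Fin g → Set R}
    (hP : ∀ i, P i ⊆ maximalIdeal R)
    (h : ∀ y : Fin g → R, (∀ i, y i ∈ P i) → IsRegularFamily y)
    (hy : ∀ i, y i ∈ Subsemigroup.closure (P i)) : IsRegularFamily y := by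
  classical
  suffices H : ∀ T : Finset (Fin g), ∀ y : Fin g → R,
      (∀ i ∈ T, y i ∈ Subsemigroup.closure (P i)) → (∀ i ∉ T, y i ∈ P i) → IsRegularFamily y from
    H Finset.univ y (fun i _ => hy i) (fun i hi => absurd (Finset.mem_univ i) hi)
  intro T
  induction T using Finset.induction_on with
  | empty => exact fun y _ hout => h y fun i => hout i (Finset.notMem_empty i)
  | insert i T hi ih =>
    intro y hin hout
    have hmem (k) : y k ∈ maximalIdeal R := by
      by_cases hk : k ∈ insert i T
      · exact mem_of_mem_subsemigroup_closure (hP k) (hin k hk)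
      · exact hP k (hout k hk)
    have hupdate (z) (hz : z ∈ P i) : IsRegularFamily (Function.update y i z) := by
      refine ih _ (fun k hk => ?_) (fun k hk => ?_)
      · rw [Function.update_of_ne (ne_of_mem_of_not_mem hk hi)]
        exact hin k (Finset.mem_insert_of_mem hk)
      · by_cases hki : k = i
        · subst hki; rwa [Function.update_self]
        · rw [Function.update_of_ne hki]
          exact hout k (by simp [hki, hk])
    simpa only [Function.update_eq_self] using isRegularFamily_update_of_mem_closure (hP i) hmem i
      hupdate (hin i (Finset.mem_insert_self i T))

lemma mem_span_of_mul_prod_pow_mem_span {x l : Fin g → R} (hx : ∀ i, x i ∈ maximalIdeal R)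
    (hl : ∀ i, l i ∈ maximalIdeal R)
    (h : ∀ y : Fin g → R, (∀ i, y i = x i ∨ y i = l i) → IsRegularFamily y) (b : Fin g → ℕ)
    {a : R} (ha : a * ∏ i, x i ^ b i ∈ Ideal.span (Set.range fun i => x i ^ b i * l i)) :
    a ∈ Ideal.span (Set.range l) := by
  classical
  have hP (i) : ({x i, l i} : Set R) ⊆ maximalIdeal R := by
    rintro z (rfl | rfl)
    exacts [hx i, hl i]
  have hxP (k) {n : ℕ} (hn : n ≠ 0) : x k ^ n ∈ Subsemigroup.closure {x k, l k} :=
    pow_mem_subsemigroup (Subsemigroup.subset_closure (Set.mem_insert _ _)) hn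
  have hlP (k) : l k ∈ Subsemigroup.closure {x k, l k} :=
    Subsemigroup.subset_closure (Set.mem_insert_of_mem _ rfl)
  refine mem_span_of_mul_prod_mem_span (fun i => x i ^ b i) l (fun i y hy c hc => ?_) ha
  by_cases hb : b i = 0
  · simpa [hb] using hc
  have hyP (k) : Function.update y i (x i ^ b i) k ∈ Subsemigroup.closure {x k, l k} := by
    by_cases hk : k = i
    · subst hk
      simpa using hxP k hb
    rw [Function.update_of_ne hk]
    rcases hy k with e | e <;> rw [e]
    · exact hlP k
    · by_cases hbk : b k = 0
      · simpa [hbk] using hlP k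
      · exact Subsemigroup.mul_mem _ (hxP k hbk) (hlP k)
  have hreg := isRegularFamily_of_forall_mem_closure hP h hyP
  rw [isRegularFamily_iff_erase (fun k => mem_of_mem_subsemigroup_closure (hP k) (hyP k)) i,
    image_update_compl_singleton] at hreg
  exact hreg.2 c (by simpa using hc)

end RegularFamilies

section QuasiRegularity

open MvPolynomial

variable {R : Type u} [CommRing R] {g : ℕ}

/-- The exponent vectors of the monomials of degree `d` in `g` variables. -/
def exponents (g d : ℕ) : Finset (Fin g →₀ ℕ) := Finset.univ.finsuppAntidiag d

lemma mem_exponents {d : ℕ} {b : Fin g →₀ ℕ} : b ∈ exponents g d ↔ ∑ i, b i = d := by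
  simp [exponents]

lemma sum_eq_of_coeff_ne_zero {K : Type*} [CommSemiring K] {P : MvPolynomial (Fin g) K} {d : ℕ}
    (hP : P.IsHomogeneous d) {b : Fin g →₀ ℕ} (hb : P.coeff b ≠ 0) : ∑ i, b i = d :=
  (Finsupp.degree_eq_sum b).symm.trans (hP.degree_eq_sum_deg_support (mem_support_iff.2 hb)).symm

lemma isHomogeneous_sum_monomial {K ι : Type*} [CommSemiring K] (t : Finset ι)
    {b : ι → Fin g →₀ ℕ} {d : ℕ} (hb : ∀ i ∈ t, ∑ l, b i l = d) (p : ι → K) :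
    (∑ i ∈ t, monomial (b i) (p i)).IsHomogeneous d :=
  IsHomogeneous.sum _ _ _ fun i hi => isHomogeneous_monomial _ (by
    rw [Finsupp.degree_eq_sum]; exact hb i hi)

lemma eval_mem_span_pow (x : Fin g → R) {P : MvPolynomial (Fin g) R} {d : ℕ}
    (hP : P.IsHomogeneous d) : eval x P ∈ Ideal.span (Set.range x) ^ d :=
  (Ideal.mem_span_pow_iff_exists_isHomogeneous _ _).2 ⟨P, hP, rfl⟩

lemma prod_pow_mem_span_pow (x : Fin g → R) {b : Fin g →₀ ℕ} {d : ℕ} (hb : ∑ i, b i = d) :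
    ∏ i, x i ^ b i ∈ Ideal.span (Set.range x) ^ d := by
  have h := Ideal.prod_mem_prod fun i (_ : i ∈ Finset.univ) =>
    Ideal.pow_mem_pow (Ideal.subset_span (Set.mem_range_self i) : x i ∈ Ideal.span _) (b i)
  rwa [Finset.prod_pow_eq_pow_sum, hb] at h

lemma span_range_le_maximalIdeal [IsLocalRing R] {x : Fin g → R}
    (hx : ∀ i, x i ∈ maximalIdeal R) : Ideal.span (Set.range x) ≤ maximalIdeal R :=
  Ideal.span_le.2 (Set.range_subset_iff.2 hx)

lemma prod_pow_mem_span_of_exists_lt (x : Fin g → R) {b c : Fin g → ℕ} (h : ∃ i, b i < c i) :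
    ∏ i, x i ^ c i ∈ Ideal.span (Set.range fun i => x i ^ b i * x i) := by
  obtain ⟨i, hi⟩ := h
  have hdvd : x i ^ b i * x i ∣ ∏ i, x i ^ c i := by
    rw [← pow_succ]
    exact (pow_dvd_pow _ hi).trans (Finset.dvd_prod_of_mem (fun i => x i ^ c i) (Finset.mem_univ i))
  exact Ideal.mem_of_dvd _ hdvd (Ideal.subset_span ⟨i, rfl⟩)

variable [IsLocalRing R] [IsNoetherianRing R] {x : Fin g → R}

/-- A regular sequence is quasi-regular. Every monomial of degree `d` other than `X ^ b`, and every
monomial of degree `d + 1`, has some exponent exceeding that of `X ^ b`. So `P.coeff b * x ^ b` lies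
in the ideal of the `x i ^ (b i + 1)`, and `x ^ b` may be cancelled. -/
lemma coeff_mem_span_of_eval_mem_span_pow_succ (hx : ∀ i, x i ∈ maximalIdeal R)
    (hreg : IsRegularFamily x) {P : MvPolynomial (Fin g) R} {d : ℕ} (hP : P.IsHomogeneous d)
    (heval : eval x P ∈ Ideal.span (Set.range x) ^ (d + 1)) (b : Fin g →₀ ℕ) :
    P.coeff b ∈ Ideal.span (Set.range x) := by
  classical
  by_cases hb : P.coeff b = 0
  · rw [hb]; exact Ideal.zero_mem _
  have hbd : ∑ i, b i = d := sum_eq_of_coeff_ne_zero hP hb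
  set Z := Ideal.span (Set.range fun i => x i ^ b i * x i)
  have hpow : Ideal.span (Set.range x) ^ (d + 1) ≤ Z := by
    intro z hz
    obtain ⟨Q, hQ, rfl⟩ := (Ideal.mem_span_pow_iff_exists_isHomogeneous _ _).1 hz
    rw [eval_eq']
    refine Ideal.sum_mem _ fun c hc =>
      Ideal.mul_mem_left _ _ (prod_pow_mem_span_of_exists_lt x ?_)
    by_contra! hle
    have hcd := sum_eq_of_coeff_ne_zero hQ (mem_support_iff.1 hc)
    have := Finset.sum_le_sum fun i (_ : i ∈ Finset.univ) => hle i
    omega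
  have hrest : ∑ c ∈ P.support.erase b, P.coeff c * ∏ i, x i ^ c i ∈ Z := by
    refine Ideal.sum_mem _ fun c hc =>
      Ideal.mul_mem_left _ _ (prod_pow_mem_span_of_exists_lt x ?_)
    rw [Finset.mem_erase] at hc
    by_contra! hle
    have hcd := sum_eq_of_coeff_ne_zero hP (mem_support_iff.1 hc.2)
    exact hc.1 (Finsupp.ext fun i => (Finset.sum_eq_sum_iff_of_le fun i _ => hle i).1
      (hcd.trans hbd.symm) i (Finset.mem_univ i))
  have hlead : P.coeff b * ∏ i, x i ^ b i ∈ Z := by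
    have := hpow heval
    rw [eval_eq', ← Finset.add_sum_erase _ _ (mem_support_iff.2 hb)] at this
    exact (Ideal.add_mem_iff_left _ hrest).1 this
  refine mem_span_of_mul_prod_pow_mem_span hx hx (fun y hy => ?_) b hlead
  rwa [funext fun i => (or_self_iff.1 (hy i) : y i = x i)]

lemma map_residue_eq_of_eval_eq (hx : ∀ i, x i ∈ maximalIdeal R) (hreg : IsRegularFamily x)
    {P Q : MvPolynomial (Fin g) R} {d : ℕ} (hP : P.IsHomogeneous d) (hQ : Q.IsHomogeneous d)
    (heval : eval x P = eval x Q) : map (residue R) P = map (residue R) Q := by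
  have hcoeff := coeff_mem_span_of_eval_mem_span_pow_succ hx hreg (hP.sub hQ) (by
    rw [map_sub, heval, sub_self]; exact Ideal.zero_mem _)
  rw [← sub_eq_zero, ← map_sub]
  ext b
  rw [coeff_map, coeff_zero, residue_eq_zero_iff]
  exact span_range_le_maximalIdeal hx (hcoeff b)

end QuasiRegularity

section SpecialIdeals

variable {R : Type u} [CommRing R]

/-- The linear forms `X 0` and `X i - c i * X (i - 1)`, each involving the preceding variable
only. -/
def chainForm (X c : ℕ → R) : ℕ → R
  | 0 => X 0
  | i + 1 => X (i + 1) - c (i + 1) * X i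

/-- The ideal generated by the forms `X i ^ s * chainForm X c i` of degree `s + 1`, for `i < m`. -/
def chainIdeal (X c : ℕ → R) (s m : ℕ) : Ideal R :=
  Ideal.span ((fun i => X i ^ s * chainForm X c i) '' Set.Iio m)

lemma chainIdeal_le_succ (X c : ℕ → R) (s m : ℕ) : chainIdeal X c s m ≤ chainIdeal X c s (m + 1) :=
  Ideal.span_mono (Set.image_mono (Set.Iio_subset_Iio m.le_succ))

lemma pow_mul_chainForm_mem_chainIdeal (X c : ℕ → R) (s m : ℕ) :
    X m ^ s * chainForm X c m ∈ chainIdeal X c s (m + 1) :=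
  Ideal.subset_span ⟨m, m.lt_succ_self, rfl⟩

lemma prod_range_pow_mem_pow {X : ℕ → R} {K : Ideal R} (hK : ∀ i, X i ∈ K) (b : ℕ → ℕ) (m : ℕ) :
    ∏ i ∈ Finset.range m, X i ^ b i ∈ K ^ ∑ i ∈ Finset.range m, b i := by
  rw [← Finset.prod_pow_eq_pow_sum]
  exact Ideal.prod_mem_prod fun i _ => Ideal.pow_mem_pow (hK i) _

lemma exists_mem_pow_pow_sub_pow_eq_mul {K : Ideal R} {a b : R} (ha : a ∈ K) (hb : b ∈ K) (e : ℕ) :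
    ∃ w ∈ K ^ (e - 1), a ^ e - b ^ e = (a - b) * w := by
  refine ⟨∑ i ∈ Finset.range e, a ^ i * b ^ (e - 1 - i), Ideal.sum_mem _ fun i hi => ?_,
    ((Commute.all a b).mul_geom_sum₂ e).symm⟩
  rw [← Nat.add_sub_of_le (Nat.le_sub_one_of_lt (Finset.mem_range.1 hi)), pow_add,
    Nat.add_sub_cancel_left]
  exact Ideal.mul_mem_mul (Ideal.pow_mem_pow ha _) (Ideal.pow_mem_pow hb _)

lemma sum_range_add_single (b : ℕ → ℕ) (m e n : ℕ) :
    ∑ i ∈ Finset.range n, (b + Pi.single m e : ℕ → ℕ) i =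
      ∑ i ∈ Finset.range n, b i + if m < n then e else 0 := by
  simp only [Pi.add_apply, Finset.sum_add_distrib, Finset.sum_pi_single', Finset.mem_range]

lemma prod_range_pow_add_single (X : ℕ → R) (b : ℕ → ℕ) (m e : ℕ) :
    ∏ i ∈ Finset.range (m + 1), X i ^ (b + Pi.single m e : ℕ → ℕ) i =
      (∏ i ∈ Finset.range (m + 1), X i ^ b i) * X m ^ e := by
  have hsingle : ∏ i ∈ Finset.range (m + 1), X i ^ (Pi.single m e : ℕ → ℕ) i = X m ^ e := by
    rw [Finset.prod_eq_single m (fun i _ hi => by rw [Pi.single_eq_of_ne hi, pow_zero])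
      (fun hm => absurd (Finset.self_mem_range_succ m) hm), Pi.single_eq_same]
  simp only [Pi.add_apply, pow_add, Finset.prod_mul_distrib, hsingle]

/-- The rewriting rule modulo `chainIdeal`: the excess of the last exponent over `s` is passed on to
the preceding variable. -/
lemma exists_prod_mul_pow_add_eq {X : ℕ → R} {K : Ideal R} (hK : ∀ i, X i ∈ K) (c : ℕ → R)
    (s m : ℕ) (b : ℕ → ℕ) (e : ℕ) :
    ∃ w ∈ K ^ (e - 1), (∏ i ∈ Finset.range (m + 1), X i ^ b i) * X (m + 1) ^ (s + e) =
      X (m + 1) ^ s * chainForm X c (m + 1) * ((∏ i ∈ Finset.range (m + 1), X i ^ b i) * w) +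
      c (m + 1) ^ e * ((∏ i ∈ Finset.range (m + 1), X i ^ (b + Pi.single m e : ℕ → ℕ) i) *
        X (m + 1) ^ s) := by
  obtain ⟨w, hw, hpow⟩ := exists_mem_pow_pow_sub_pow_eq_mul (hK (m + 1))
    (Ideal.mul_mem_left K (c (m + 1)) (hK m)) e
  refine ⟨w, hw, ?_⟩
  rw [prod_range_pow_add_single, chainForm, pow_add]
  rw [mul_pow] at hpow
  linear_combination (∏ i ∈ Finset.range (m + 1), X i ^ b i) * X (m + 1) ^ s * hpow

lemma prod_range_pow_mem_chainIdeal_mul_pow {X : ℕ → R} {K : Ideal R} (hK : ∀ i, X i ∈ K)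
    (c : ℕ → R) (s : ℕ) {m : ℕ} {b : ℕ → ℕ} (hb : m * s < ∑ i ∈ Finset.range m, b i) :
    ∏ i ∈ Finset.range m, X i ^ b i ∈
      chainIdeal X c s m * K ^ (∑ i ∈ Finset.range m, b i - (s + 1)) := by
  induction m generalizing b with
  | zero => simp at hb
  | succ m ih =>
    rw [Finset.sum_range_succ, Nat.succ_mul] at hb
    rw [Finset.sum_range_succ, Finset.prod_range_succ]
    set S := ∑ i ∈ Finset.range m, b i with hS
    have mul_pow_mem {p : R} {d k : ℕ} (hp : p ∈ chainIdeal X c s m * K ^ d)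
        (hd : d + k = S + b m - (s + 1)) :
        p * X m ^ k ∈ chainIdeal X c s (m + 1) * K ^ (S + b m - (s + 1)) := by
      rw [← hd, pow_add, ← mul_assoc]
      exact Ideal.mul_mem_mul (Ideal.mul_mono_left (chainIdeal_le_succ X c s m) hp)
        (Ideal.pow_mem_pow (hK m) k)
    rcases le_or_gt (b m) s with h | h
    · have hs : s ≤ m * s := Nat.le_mul_of_pos_left s
        (Nat.pos_of_ne_zero fun hm => by
          subst hm; rw [Finset.sum_range_zero] at hS; omega)
      exact mul_pow_mem (ih (by omega)) (by omega)
    obtain ⟨e, he⟩ := Nat.exists_eq_add_of_lt h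
    rcases m with _ | m
    · rw [he, hS, Finset.sum_range_zero, Finset.prod_range_zero, one_mul,
        show 0 + (s + e + 1) - (s + 1) = e by omega, show s + e + 1 = s + 1 + e by ring, pow_add,
        pow_succ]
      exact Ideal.mul_mem_mul (pow_mul_chainForm_mem_chainIdeal X c s 0)
        (Ideal.pow_mem_pow (hK 0) e)
    · obtain ⟨w, hw, hsplit⟩ := exists_prod_mul_pow_add_eq hK c s m b (e + 1)
      have hsum := sum_range_add_single b m (e + 1) (m + 1)
      rw [← hS, if_pos m.lt_succ_self] at hsum
      have hs : s ≤ (m + 1) * s := Nat.le_mul_of_pos_left s m.succ_pos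
      rw [show X (m + 1) ^ b (m + 1) = X (m + 1) ^ (s + (e + 1)) by rw [he, add_assoc], hsplit]
      refine Ideal.add_mem _ (Ideal.mul_mem_mul (pow_mul_chainForm_mem_chainIdeal X c s _) ?_)
        (Ideal.mul_mem_left _ _ (mul_pow_mem (ih (by omega)) (by omega)))
      rw [show S + b (m + 1) - (s + 1) = S + (e + 1 - 1) by omega, pow_add]
      exact Ideal.mul_mem_mul (prod_range_pow_mem_pow hK b _) hw

/-- The ballot condition: every initial segment of the first `m` exponents has average at most
`s`. -/
def IsBallot (s m : ℕ) (b : ℕ → ℕ) : Prop :=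
  ∀ i ≤ m, ∑ l ∈ Finset.range i, b l ≤ i * s

open Classical in
/-- The coefficient with which a monomial of degree `m * s` with exponents `b` is congruent to
`∏ i < m, X i ^ s` modulo `chainIdeal X c s m`. -/
noncomputable def ballotCoeff (c : ℕ → R) (s m : ℕ) (b : ℕ → ℕ) : R :=
  if IsBallot s m b then ∏ i ∈ Finset.range m, c i ^ (i * s - ∑ l ∈ Finset.range i, b l) else 0

lemma isBallot_succ_iff_add_single {s m e : ℕ} {b : ℕ → ℕ} (hb : b (m + 1) = s + e)
    (hsum : ∑ i ∈ Finset.range (m + 2), b i = (m + 2) * s) :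
    IsBallot s (m + 2) b ↔ IsBallot s (m + 1) (b + Pi.single m e) := by
  rw [Finset.sum_range_succ, hb, Nat.succ_mul] at hsum
  simp only [IsBallot, sum_range_add_single]
  refine ⟨fun h i hi => ?_, fun h i hi => ?_⟩
  · rcases Nat.lt_or_eq_of_le hi with hi | rfl
    · rw [if_neg (by omega)]
      exact h i (by omega)
    · rw [if_pos m.lt_succ_self]
      omega
  · rcases Nat.lt_or_ge (m + 1) i with hi' | hi'
    · obtain rfl : i = m + 2 := by omega
      rw [Finset.sum_range_succ, hb, Nat.succ_mul]
      omega
    · exact (Nat.le_add_right _ _).trans (h i hi')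

lemma ballotCoeff_succ_eq_pow_mul (c : ℕ → R) {s m e : ℕ} {b : ℕ → ℕ} (hb : b (m + 1) = s + e)
    (hsum : ∑ i ∈ Finset.range (m + 2), b i = (m + 2) * s) :
    ballotCoeff c s (m + 2) b =
      c (m + 1) ^ e * ballotCoeff c s (m + 1) (b + Pi.single m e) := by
  have hlast : (m + 1) * s - ∑ l ∈ Finset.range (m + 1), b l = e := by
    rw [Finset.sum_range_succ, hb, Nat.succ_mul] at hsum
    omega
  by_cases hballot : IsBallot s (m + 2) b
  · rw [ballotCoeff, if_pos hballot, ballotCoeff,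
      if_pos ((isBallot_succ_iff_add_single hb hsum).1 hballot), Finset.prod_range_succ, mul_comm,
      hlast]
    congr 1
    refine Finset.prod_congr rfl fun i hi => ?_
    rw [sum_range_add_single, if_neg (by simpa [Nat.lt_succ_iff] using hi), add_zero]
  · rw [ballotCoeff, if_neg hballot, ballotCoeff,
      if_neg (mt (isBallot_succ_iff_add_single hb hsum).2 hballot), mul_zero]

lemma ballotCoeff_eq_zero_of_lt (c : ℕ → R) {s m : ℕ} {b : ℕ → ℕ} (hb : b m < s)
    (hsum : ∑ i ∈ Finset.range (m + 1), b i = (m + 1) * s) : ballotCoeff c s (m + 1) b = 0 := by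
  refine if_neg fun h => ?_
  have := h m m.le_succ
  rw [Finset.sum_range_succ, Nat.succ_mul] at hsum
  omega

lemma prod_range_pow_sub_ballotCoeff_mul_mem_chainIdeal (X c : ℕ → R) {s m : ℕ} {b : ℕ → ℕ}
    (hb : ∑ i ∈ Finset.range m, b i = m * s) :
    ∏ i ∈ Finset.range m, X i ^ b i - ballotCoeff c s m b * ∏ i ∈ Finset.range m, X i ^ s ∈
      chainIdeal X c s m := by
  induction m generalizing b with
  | zero => simp [ballotCoeff, IsBallot]
  | succ m ih =>
    have hK : ∀ i, X i ∈ (⊤ : Ideal R) := fun _ => Submodule.mem_top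
    have hlast := hb
    rw [Finset.sum_range_succ, Nat.succ_mul] at hlast
    rcases Nat.lt_or_ge (b m) s with h | h
    · rw [ballotCoeff_eq_zero_of_lt c h hb, zero_mul, sub_zero, Finset.prod_range_succ]
      have hmem := prod_range_pow_mem_chainIdeal_mul_pow hK c s (by omega :
        m * s < ∑ i ∈ Finset.range m, b i)
      exact Ideal.mul_mem_right _ _ (chainIdeal_le_succ X c s m (Ideal.mul_le_left hmem))
    obtain ⟨e, he⟩ := Nat.exists_eq_add_of_le h
    rcases m with _ | m
    · have hb0 : b 0 = s := by simpa using hb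
      have hballot : IsBallot s 1 b := fun i hi => by interval_cases i <;> simp [hb0]
      simp [ballotCoeff, hballot, hb0]
    · obtain ⟨w, -, hsplit⟩ := exists_prod_mul_pow_add_eq hK c s m b e
      have hmem := ih (b := b + Pi.single m e) (by
        rw [sum_range_add_single, if_pos m.lt_succ_self]; omega)
      rw [ballotCoeff_succ_eq_pow_mul c he hb, Finset.prod_range_succ, he, hsplit,
        Finset.prod_range_succ (n := m + 1)]
      convert Ideal.add_mem _
        (Ideal.mul_mem_right ((∏ i ∈ Finset.range (m + 1), X i ^ b i) * w) _
          (pow_mul_chainForm_mem_chainIdeal X c s (m + 1)))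
        (Ideal.mul_mem_left _ (c (m + 1) ^ e * X (m + 1) ^ s) (chainIdeal_le_succ X c s _ hmem))
        using 1
      ring

/-- Extends a family indexed by `Fin g` by zero to `ℕ`, so that `chainForm` applies to it. -/
noncomputable def natExtend {α : Type*} [Zero α] {g : ℕ} (x : Fin g → α) : ℕ → α :=
  Function.extend Fin.val x 0

@[simp]
lemma natExtend_val {α : Type*} [Zero α] {g : ℕ} (x : Fin g → α) (i : Fin g) :
    natExtend x i = x i :=
  Fin.val_injective.extend_apply x 0 i

lemma natExtend_mem_span {g : ℕ} (x : Fin g → R) (i : ℕ) :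
    natExtend x i ∈ Ideal.span (Set.range x) := by
  by_cases h : ∃ k : Fin g, k.val = i
  · obtain ⟨k, rfl⟩ := h
    exact natExtend_val x k ▸ Ideal.subset_span (Set.mem_range_self k)
  · rw [natExtend, Function.extend_apply' _ _ _ h]
    exact Ideal.zero_mem _

lemma sum_range_natExtend {g : ℕ} (b : Fin g → ℕ) :
    ∑ i ∈ Finset.range g, natExtend b i = ∑ i, b i := by
  simp only [Finset.sum_range, natExtend_val]

lemma prod_range_natExtend_pow {g : ℕ} (x : Fin g → R) (b : Fin g → ℕ) :
    ∏ i ∈ Finset.range g, natExtend x i ^ natExtend b i = ∏ i, x i ^ b i := by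
  simp only [Finset.prod_range, natExtend_val]

variable {g : ℕ}

/-- The `i`-th linear form `x i - c i * x (i - 1)` of a special ideal. -/
noncomputable def specialForm (x : Fin g → R) (c : ℕ → R) (i : Fin g) : R :=
  chainForm (natExtend x) c i

/-- The special reductions of `(x) ^ (s + 1)` used to compute its core. They are generated by the
forms `x i ^ s * (x i - c i * x (i - 1))`. -/
noncomputable def specialIdeal (x : Fin g → R) (c : ℕ → R) (s : ℕ) : Ideal R :=
  Ideal.span (Set.range fun i => x i ^ s * specialForm x c i)

lemma specialIdeal_eq_chainIdeal (x : Fin g → R) (c : ℕ → R) (s : ℕ) :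
    specialIdeal x c s = chainIdeal (natExtend x) c s g := by
  rw [specialIdeal, chainIdeal, ← Fin.range_val, ← Set.range_comp]
  simp only [Function.comp_def, natExtend_val, specialForm]

lemma specialForm_sub_mem_span_Iio (x : Fin g → R) (c : ℕ → R) (i : Fin g) :
    specialForm x c i - x i ∈ Ideal.span (x '' Set.Iio i) := by
  obtain ⟨_ | i, hi⟩ := i
  · have := natExtend_val x ⟨0, hi⟩
    simp_all [specialForm, chainForm]
  · have hprev : natExtend x i = x ⟨i, by omega⟩ := natExtend_val x ⟨i, by omega⟩
    have hself : natExtend x (i + 1) = x ⟨i + 1, hi⟩ := natExtend_val x ⟨i + 1, hi⟩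
    rw [specialForm, chainForm, hself, hprev, sub_sub_cancel_left]
    exact neg_mem (Ideal.mul_mem_left _ _ (Ideal.subset_span ⟨_, by simp, rfl⟩))

lemma span_range_specialForm (x : Fin g → R) (c : ℕ → R) :
    Ideal.span (Set.range (specialForm x c)) = Ideal.span (Set.range x) := by
  simpa only [Set.image_univ] using
    span_image_eq_of_sub_mem_span_Iio (specialForm_sub_mem_span_Iio x c) isLowerSet_univ

lemma specialForm_mem_span (x : Fin g → R) (c : ℕ → R) (i : Fin g) :
    specialForm x c i ∈ Ideal.span (Set.range x) :=
  span_range_specialForm x c ▸ Ideal.subset_span (Set.mem_range_self i)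

lemma pow_mul_specialForm_mem_span_pow (x : Fin g → R) (c : ℕ → R) (s : ℕ) (i : Fin g) :
    x i ^ s * specialForm x c i ∈ Ideal.span (Set.range x) ^ (s + 1) := by
  rw [pow_succ]
  exact Ideal.mul_mem_mul (Ideal.pow_mem_pow (Ideal.subset_span (Set.mem_range_self i)) _)
    (specialForm_mem_span x c i)

lemma specialIdeal_le_span_pow (x : Fin g → R) (c : ℕ → R) (s : ℕ) :
    specialIdeal x c s ≤ Ideal.span (Set.range x) ^ (s + 1) :=
  Ideal.span_le.2 (Set.range_subset_iff.2 (pow_mul_specialForm_mem_span_pow x c s))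

lemma isReduction_specialIdeal (x : Fin g → R) (c : ℕ → R) (s : ℕ) :
    IsReduction (specialIdeal x c s) (Ideal.span (Set.range x) ^ (s + 1)) := by
  refine ⟨specialIdeal_le_span_pow x c s, g, le_antisymm ?_ ?_⟩
  · rw [← pow_mul, ← pow_mul]
    intro z hz
    obtain ⟨P, hP, rfl⟩ := (Ideal.mem_span_pow_iff_exists_isHomogeneous _ _).1 hz
    rw [MvPolynomial.eval_eq', specialIdeal_eq_chainIdeal]
    refine Ideal.sum_mem _ fun b hb => Ideal.mul_mem_left _ _ ?_
    have hdeg : ∑ i ∈ Finset.range g, natExtend b i = (s + 1) * (g + 1) := by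
      rw [sum_range_natExtend, sum_eq_of_coeff_ne_zero hP (MvPolynomial.mem_support_iff.1 hb)]
    have hmem := prod_range_pow_mem_chainIdeal_mul_pow (natExtend_mem_span x) c s (b := natExtend b)
      (m := g) (by rw [hdeg]; nlinarith)
    rwa [prod_range_natExtend_pow, hdeg, Nat.mul_succ, Nat.add_sub_cancel] at hmem
  · rw [pow_succ' (Ideal.span (Set.range x) ^ (s + 1))]
    exact Ideal.mul_mono_left (specialIdeal_le_span_pow x c s)

lemma IsRegularFamily.of_eq_or_eq_specialForm {x : Fin g → R} (h : IsRegularFamily x)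
    (c : ℕ → R) {y : Fin g → R} (hy : ∀ i, y i = x i ∨ y i = specialForm x c i) :
    IsRegularFamily y := by
  refine h.of_sub_mem_span_Iio fun i => ?_
  rcases hy i with hi | hi
  · rw [hi, sub_self]
    exact Ideal.zero_mem _
  · rw [hi]
    exact specialForm_sub_mem_span_Iio x c i

variable [IsLocalRing R] [IsNoetherianRing R]

lemma mem_span_of_mul_prod_pow_mem_specialIdeal {x : Fin g → R} (h : IsRegularFamily x)
    (hx : ∀ i, x i ∈ maximalIdeal R) (c : ℕ → R) (s : ℕ) {a : R}
    (ha : a * ∏ i, x i ^ s ∈ specialIdeal x c s) : a ∈ Ideal.span (Set.range x) := by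
  rw [← span_range_specialForm x c]
  exact mem_span_of_mul_prod_pow_mem_span hx
    (fun i => span_range_le_maximalIdeal hx (specialForm_mem_span x c i))
    (fun _ => h.of_eq_or_eq_specialForm c) (fun _ => s) ha

lemma sum_mul_ballotCoeff_mem_span {x : Fin g → R} (h : IsRegularFamily x)
    (hx : ∀ i, x i ∈ maximalIdeal R) (σ : Equiv.Perm (Fin g)) (c : ℕ → R) (s : ℕ)
    (p : (Fin g →₀ ℕ) → R)
    (hz : ∑ b ∈ exponents g (g * s), p b * ∏ i, x i ^ b i ∈ specialIdeal (x ∘ σ) c s) :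
    ∑ b ∈ exponents g (g * s), p b * ballotCoeff c s g (natExtend (b ∘ σ)) ∈
      Ideal.span (Set.range x) := by
  rw [← σ.surjective.range_comp x]
  refine mem_span_of_mul_prod_pow_mem_specialIdeal (h.comp_perm hx σ) (fun i => hx (σ i)) c s ?_
  have hmonomial (b) (hb : b ∈ exponents g (g * s)) :
      ∏ i, x i ^ b i - ballotCoeff c s g (natExtend (b ∘ σ)) * ∏ i, (x ∘ σ) i ^ s ∈
        specialIdeal (x ∘ σ) c s := by
    have hb' : ∑ i, (b ∘ σ) i = g * s := (Equiv.sum_comp σ b).trans (mem_exponents.1 hb)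
    have := prod_range_pow_sub_ballotCoeff_mul_mem_chainIdeal (natExtend (x ∘ σ)) c
      ((sum_range_natExtend _).trans hb')
    rw [prod_range_natExtend_pow, ← specialIdeal_eq_chainIdeal,
      show ∏ i, (x ∘ σ) i ^ (b ∘ σ) i = ∏ i, x i ^ b i from
        Equiv.prod_comp σ fun i => x i ^ b i,
      Finset.prod_range fun i => natExtend (x ∘ σ) i ^ s] at this
    simpa only [natExtend_val] using this
  have hdiff := Ideal.sum_mem _ fun b hb => Ideal.mul_mem_left _ (p b) (hmonomial b hb)
  convert Ideal.sub_mem _ hz hdiff using 1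
  rw [← Finset.sum_sub_distrib, Finset.sum_mul]
  exact Finset.sum_congr rfl fun b _ => by ring

end SpecialIdeals

section Spanning

lemma card_exponents {g d : ℕ} (hg : 1 ≤ g) :
    (exponents g d).card = (g - 1 + d).choose (g - 1) := by
  rw [exponents, Finset.card_finsuppAntidiag_nat_eq_choose, Finset.card_univ, Fintype.card_fin,
    show g + d - 1 = g - 1 + d by omega, Nat.choose_symm_add]

lemma isBallot_of_monotoneOn {s m : ℕ} {b : ℕ → ℕ} (hb : MonotoneOn b (Set.Iio m))
    (hsum : ∑ l ∈ Finset.range m, b l = m * s) : IsBallot s m b := by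
  intro i hi
  by_cases h : ∀ l ∈ Finset.range i, b l ≤ s
  · simpa using Finset.sum_le_card_nsmul _ _ _ h
  push Not at h
  obtain ⟨l, hl, hls⟩ := h
  have htail : (m - i) * s ≤ ∑ j ∈ Finset.Ico i m, b j := by
    simpa using Finset.card_nsmul_le_sum (Finset.Ico i m) b s fun j hj => by
      simp only [Finset.mem_range, Finset.mem_Ico] at hl hj
      exact hls.le.trans (hb (hl.trans_le hi) hj.2 (hl.le.trans hj.1))
  have htotal := Finset.sum_range_add_sum_Ico b hi
  have hsplit : i * s + (m - i) * s = m * s := by rw [← add_mul, Nat.add_sub_cancel' hi]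
  omega

/-- The exponents of the `c i` in `ballotCoeff c s m b`. -/
noncomputable def ballotExponents (s m : ℕ) (b : ℕ → ℕ) : ℕ →₀ ℕ :=
  Finsupp.indicator (Finset.range m) fun i _ => i * s - ∑ l ∈ Finset.range i, b l

lemma ballotExponents_apply {s m : ℕ} {b : ℕ → ℕ} {i : ℕ} (hi : i < m) :
    ballotExponents s m b i = i * s - ∑ l ∈ Finset.range i, b l :=
  Finsupp.indicator_of_mem (Finset.mem_range.2 hi) _

lemma eq_of_ballotExponents_eq {s m : ℕ} {b b' : ℕ → ℕ} (hb : IsBallot s m b)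
    (hb' : IsBallot s m b') (hsum : ∑ l ∈ Finset.range m, b l = ∑ l ∈ Finset.range m, b' l)
    (h : ballotExponents s m b = ballotExponents s m b') {i : ℕ} (hi : i < m) : b i = b' i := by
  have hprefix : ∀ i ≤ m, ∑ l ∈ Finset.range i, b l = ∑ l ∈ Finset.range i, b' l := by
    intro i hi
    rcases hi.lt_or_eq with him | rfl
    · have heq := DFunLike.congr_fun h i
      rw [ballotExponents_apply him, ballotExponents_apply him] at heq
      have := hb i hi
      have := hb' i hi
      omega
    · exact hsum
  have := hprefix (i + 1) hi
  rwa [Finset.sum_range_succ, Finset.sum_range_succ, hprefix i hi.le, add_right_inj] at this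

lemma map_ballotCoeff {A B : Type*} [CommRing A] [CommRing B] (f : A →+* B) (c : ℕ → A) (s m : ℕ)
    (b : ℕ → ℕ) : f (ballotCoeff c s m b) = ballotCoeff (fun i => f (c i)) s m b := by
  rw [ballotCoeff, ballotCoeff, apply_ite f, map_prod, map_zero]
  simp only [map_pow]

open Classical in
lemma ballotCoeff_X (A : Type*) [CommRing A] (s m : ℕ) (b : ℕ → ℕ) :
    ballotCoeff (MvPolynomial.X : ℕ → MvPolynomial ℕ A) s m b =
      if IsBallot s m b then MvPolynomial.monomial (ballotExponents s m b) 1 else 0 := by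
  rw [ballotCoeff, MvPolynomial.monomial_eq, map_one, one_mul, ballotExponents,
    Finsupp.prod_indicator_index_eq_prod_attach _ fun i _ => pow_zero _,
    Finset.prod_attach (Finset.range m) fun i =>
      MvPolynomial.X i ^ (i * s - ∑ l ∈ Finset.range i, b l)]

variable {g : ℕ}

lemma coeff_sum_C_mul_ballotCoeff_X {A : Type*} [CommRing A] {s : ℕ} (σ : Equiv.Perm (Fin g))
    {b : Fin g →₀ ℕ} (hb : b ∈ exponents g (g * s)) (hballot : IsBallot s g (natExtend (b ∘ σ)))
    (p : (Fin g →₀ ℕ) → A) :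
    (∑ a ∈ exponents g (g * s), MvPolynomial.C (p a) *
      ballotCoeff MvPolynomial.X s g (natExtend (a ∘ σ))).coeff
        (ballotExponents s g (natExtend (b ∘ σ))) = p b := by
  have hsum {a : Fin g →₀ ℕ} (ha : a ∈ exponents g (g * s)) :
      ∑ l ∈ Finset.range g, natExtend (a ∘ σ) l = g * s :=
    (sum_range_natExtend _).trans ((Equiv.sum_comp σ a).trans (mem_exponents.1 ha))
  rw [MvPolynomial.coeff_sum, Finset.sum_eq_single_of_mem b hb, ballotCoeff_X, if_pos hballot,
    MvPolynomial.coeff_C_mul, MvPolynomial.coeff_monomial, if_pos rfl, mul_one]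
  intro a ha hab
  rw [ballotCoeff_X, MvPolynomial.coeff_C_mul]
  split_ifs with haballot
  · rw [MvPolynomial.coeff_monomial, if_neg, mul_zero]
    refine fun heq => hab (Finsupp.ext fun i => ?_)
    have := eq_of_ballotExponents_eq haballot hballot ((hsum ha).trans (hsum hb).symm) heq
      (σ.symm i).2
    simpa using this
  · rw [MvPolynomial.coeff_zero, mul_zero]

lemma eq_zero_of_forall_sum_mul_ballotCoeff_eq_zero {k : Type*} [CommRing k] [IsDomain k]
    [Infinite k] {s : ℕ} {p : (Fin g →₀ ℕ) → k}
    (hp : ∀ (σ : Equiv.Perm (Fin g)) (c : ℕ → k),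
      ∑ a ∈ exponents g (g * s), p a * ballotCoeff c s g (natExtend (a ∘ σ)) = 0)
    {b : Fin g →₀ ℕ} (hb : b ∈ exponents g (g * s)) : p b = 0 := by
  -- Sorting the exponents of `b` in increasing order makes it satisfy the ballot condition.
  let σ := Tuple.sort b
  have hsum : ∑ l ∈ Finset.range g, natExtend (b ∘ σ) l = g * s :=
    (sum_range_natExtend _).trans ((Equiv.sum_comp σ b).trans (mem_exponents.1 hb))
  have hballot : IsBallot s g (natExtend (b ∘ σ)) := by
    refine isBallot_of_monotoneOn (fun i hi j hj hij => ?_) hsum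
    have := Tuple.monotone_sort b (Fin.mk_le_mk (hx := hi) (hy := hj).2 hij)
    rwa [← natExtend_val (b ∘ σ), ← natExtend_val (b ∘ σ)] at this
  have hpoly : ∑ a ∈ exponents g (g * s), MvPolynomial.C (p a) *
      ballotCoeff MvPolynomial.X s g (natExtend (a ∘ σ)) = 0 := by
    refine MvPolynomial.funext fun c => ?_
    simp only [map_sum, map_mul, MvPolynomial.eval_C, map_ballotCoeff, MvPolynomial.eval_X,
      map_zero]
    exact hp σ c
  rw [← coeff_sum_C_mul_ballotCoeff_X σ hb hballot p, hpoly, MvPolynomial.coeff_zero]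

/-- The coefficients of the monomials of degree `g * s` modulo the special ideal given by the
permutation `q.1` of the variables and the parameters `q.2`. -/
noncomputable def ballotVector {A : Type*} [CommRing A] (s : ℕ)
    (q : Equiv.Perm (Fin g) × (ℕ → A)) : exponents g (g * s) → A :=
  fun b => ballotCoeff q.2 s g (natExtend (b.1 ∘ q.1))

section LinearAlgebra

variable {k ι κ : Type*} [Field k] [Fintype ι]

lemma span_range_eq_top_of_forall_dotProduct_eq_zero (v : κ → ι → k)
    (h : ∀ p : ι → k, (∀ q, p ⬝ᵥ v q = 0) → p = 0) : Submodule.span k (Set.range v) = ⊤ := by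
  classical
  by_contra hne
  obtain ⟨f, hf, hker⟩ := Submodule.exists_le_ker_of_lt_top _ (lt_top_iff_ne_top.2 hne)
  obtain ⟨p, rfl⟩ := (dotProductEquiv k ι).surjective f
  refine hf ?_
  rw [h p fun q => hker (Submodule.subset_span ⟨q, rfl⟩), map_zero]

lemma exists_isUnit_of_span_range_eq_top [DecidableEq ι] {v : κ → ι → k}
    (hv : Submodule.span k (Set.range v) = ⊤) :
    ∃ q : ι → κ, IsUnit (Matrix.of fun i => v (q i)) := by
  obtain ⟨κ', a, -, hspan, hli⟩ := exists_linearIndependent' k v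
  let e := (Pi.basisFun k ι).indexEquiv (Module.Basis.mk hli (hspan.trans hv).ge)
  exact ⟨a ∘ e, Matrix.linearIndependent_rows_iff_isUnit.1 (hli.comp e e.injective)⟩

end LinearAlgebra

lemma exists_isUnit_ballotVector (k : Type*) [Field k] [Infinite k] (g s : ℕ) :
    ∃ q : exponents g (g * s) → Equiv.Perm (Fin g) × (ℕ → k),
      IsUnit (Matrix.of fun i => ballotVector s (q i)) := by
  refine exists_isUnit_of_span_range_eq_top
    (span_range_eq_top_of_forall_dotProduct_eq_zero _ fun p hp => ?_)
  let p' : (Fin g →₀ ℕ) → k := Function.extend Subtype.val p 0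
  have hp' (b : exponents g (g * s)) : p' b = p b := Subtype.val_injective.extend_apply p 0 b
  refine funext fun b => (hp' b).symm.trans
    (eq_zero_of_forall_sum_mul_ballotCoeff_eq_zero (fun σ c => ?_) b.2)
  rw [← Finset.sum_coe_sort, ← hp (σ, c)]
  exact Finset.sum_congr rfl fun b _ => by rw [hp']; rfl

end Spanning

section Intersection

open MvPolynomial

variable {R : Type u} [CommRing R] {g : ℕ}

lemma eval_eq_sum_exponents {d : ℕ} (x : Fin g → R) {P : MvPolynomial (Fin g) R}
    (hP : P.IsHomogeneous d) :
    eval x P = ∑ b ∈ exponents g d, P.coeff b * ∏ i, x i ^ b i := by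
  rw [eval_eq']
  refine Finset.sum_subset (fun b hb => ?_) fun b _ hb => ?_
  · exact mem_exponents.2 (sum_eq_of_coeff_ne_zero hP (mem_support_iff.1 hb))
  · rw [notMem_support_iff.1 hb, zero_mul]

lemma eval_mem_span_pow_succ_of_coeff_mem {x : Fin g → R} {P : MvPolynomial (Fin g) R} {d : ℕ}
    (hP : P.IsHomogeneous d) (hcoeff : ∀ b, P.coeff b ∈ Ideal.span (Set.range x)) :
    eval x P ∈ Ideal.span (Set.range x) ^ (d + 1) := by
  rw [eval_eq_sum_exponents x hP, pow_succ']
  exact Ideal.sum_mem _ fun b hb =>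
    Ideal.mul_mem_mul (hcoeff b) (prod_pow_mem_span_pow x (mem_exponents.1 hb))

/-- An element of `N` of order `d ≤ n` is the value of a form of degree `d`, which a power of a
variable turns into a form of degree `n` with the same coefficients. -/
lemma le_span_pow_succ_of_coeff_mem (hg : 1 ≤ g) {x : Fin g → R} {N : Ideal R} {n : ℕ}
    (hN : ∀ P : MvPolynomial (Fin g) R, P.IsHomogeneous n → eval x P ∈ N →
      ∀ b, P.coeff b ∈ Ideal.span (Set.range x)) :
    N ≤ Ideal.span (Set.range x) ^ (n + 1) := by
  intro z hz
  suffices H : ∀ d ≤ n + 1, z ∈ Ideal.span (Set.range x) ^ d from H _ le_rfl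
  intro d
  induction d with
  | zero => intro _; rw [pow_zero, Ideal.one_eq_top]; exact Submodule.mem_top
  | succ d ih =>
    intro hd
    obtain ⟨P, hP, rfl⟩ := (Ideal.mem_span_pow_iff_exists_isHomogeneous _ _).1 (ih (by omega))
    let i₀ : Fin g := ⟨0, hg⟩
    have hhom : (P * X i₀ ^ (n - d)).IsHomogeneous n := by
      have := hP.mul ((isHomogeneous_X R i₀).pow (n - d))
      rwa [one_mul, Nat.add_sub_cancel' (Nat.lt_succ_iff.1 hd)] at this
    refine eval_mem_span_pow_succ_of_coeff_mem hP fun b => ?_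
    have := hN _ hhom (by rw [map_mul]; exact Ideal.mul_mem_right _ _ hz)
      (b + Finsupp.single i₀ (n - d))
    rwa [X_pow_eq_monomial, coeff_mul_monomial, mul_one] at this

lemma mem_of_isUnit_of_forall_sum_mul_mem {ι : Type*} [Fintype ι] [DecidableEq ι] {I : Ideal R}
    {A : Matrix ι ι R} (hA : IsUnit A) {p : ι → R} (hp : ∀ i, ∑ j, p j * A i j ∈ I) (j : ι) :
    p j ∈ I := by
  have hmul : A⁻¹.mulVec (A.mulVec p) = p := by
    rw [Matrix.mulVec_mulVec, Matrix.nonsing_inv_mul _ ((Matrix.isUnit_iff_isUnit_det _).1 hA),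
      Matrix.one_mulVec]
  rw [← hmul]
  refine Ideal.sum_mem _ fun i _ => Ideal.mul_mem_left _ _ ?_
  simpa only [Matrix.mulVec, dotProduct, mul_comm] using hp i

lemma exists_isUnit_ballotVector_of_isLocalRing (R : Type*) [CommRing R] [IsLocalRing R]
    [Infinite (ResidueField R)] (g s : ℕ) :
    ∃ q : exponents g (g * s) → Equiv.Perm (Fin g) × (ℕ → R),
      IsUnit (Matrix.of fun i => ballotVector s (q i)) := by
  obtain ⟨q, hq⟩ := exists_isUnit_ballotVector (ResidueField R) g s
  choose c hc using fun i l => residue_surjective ((q i).2 l)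
  refine ⟨fun i => ((q i).1, c i), ?_⟩
  have hmap : (residue R).mapMatrix (Matrix.of fun i => ballotVector s ((q i).1, c i)) =
      Matrix.of fun i => ballotVector s (q i) := by
    ext i b
    simp only [RingHom.mapMatrix_apply, Matrix.map_apply, Matrix.of_apply, ballotVector,
      map_ballotCoeff, hc]
  rw [Matrix.isUnit_iff_isUnit_det] at hq ⊢
  rw [← hmap, ← RingHom.map_det] at hq
  exact (isUnit_map_iff (residue R) _).1 hq

variable [IsLocalRing R] [IsNoetherianRing R]

lemma coeff_mem_span_of_eval_mem_specialIdeal {x : Fin g → R} (h : IsRegularFamily x)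
    (hx : ∀ i, x i ∈ maximalIdeal R) {s : ℕ}
    {q : exponents g (g * s) → Equiv.Perm (Fin g) × (ℕ → R)}
    (hq : IsUnit (Matrix.of fun i => ballotVector s (q i))) {P : MvPolynomial (Fin g) R}
    (hP : P.IsHomogeneous (g * s))
    (heval : ∀ i, eval x P ∈ specialIdeal (x ∘ (q i).1) (q i).2 s) (b : Fin g →₀ ℕ) :
    P.coeff b ∈ Ideal.span (Set.range x) := by
  by_cases hb : P.coeff b = 0
  · rw [hb]
    exact Ideal.zero_mem _
  refine mem_of_isUnit_of_forall_sum_mul_mem hq (p := fun b => P.coeff b.1) (fun i => ?_)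
    ⟨b, mem_exponents.2 (sum_eq_of_coeff_ne_zero hP hb)⟩
  have := heval i
  rw [eval_eq_sum_exponents x hP] at this
  have := sum_mul_ballotCoeff_mem_span h hx (q i).1 (q i).2 s _ this
  rwa [← Finset.sum_coe_sort] at this

lemma exists_iInf_specialIdeal_le (hg : 1 ≤ g) [Infinite (ResidueField R)] {x : Fin g → R}
    (h : IsRegularFamily x) (hx : ∀ i, x i ∈ maximalIdeal R) (s : ℕ) :
    ∃ q : exponents g (g * s) → Equiv.Perm (Fin g) × (ℕ → R),
      ⨅ i, specialIdeal (x ∘ (q i).1) (q i).2 s ≤ Ideal.span (Set.range x) ^ (g * s + 1) := by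
  obtain ⟨q, hq⟩ := exists_isUnit_ballotVector_of_isLocalRing R g s
  exact ⟨q, le_span_pow_succ_of_coeff_mem hg fun P hP heval =>
    coeff_mem_span_of_eval_mem_specialIdeal h hx hq hP (Ideal.mem_iInf.1 heval)⟩

end Intersection

section RegularForms

open RingTheory.Sequence CategoryTheory Abelian

lemma isRegularFamily_X (k : Type u) [CommRing k] (g : ℕ) :
    IsRegularFamily (MvPolynomial.X : Fin g → MvPolynomial (Fin g) k) := by
  rw [isRegularFamily_iff]
  intro i a ha
  rw [MvPolynomial.mem_ideal_span_X_image] at ha ⊢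
  intro m hm
  obtain ⟨l, hl, hne⟩ := ha (m + Finsupp.single i 1) (by
    rwa [MvPolynomial.mem_support_iff, mul_comm, MvPolynomial.coeff_mul_X,
      ← MvPolynomial.mem_support_iff])
  refine ⟨l, hl, ?_⟩
  rwa [Finsupp.add_apply, Finsupp.single_eq_of_ne (ne_of_lt hl), add_zero] at hne

lemma span_range_X_ne_top (k : Type u) [CommRing k] [Nontrivial k] (g : ℕ) :
    Ideal.span (Set.range (MvPolynomial.X : Fin g → MvPolynomial (Fin g) k)) ≠ ⊤ := by
  refine ne_top_of_le_ne_top (RingHom.ker_ne_top (MvPolynomial.constantCoeff (R := k)))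
    (Ideal.span_le.2 ?_)
  rintro _ ⟨i, rfl⟩
  exact MvPolynomial.constantCoeff_X k i

variable {B : Type u} [CommRing B]

lemma subsingleton_ext_quotSMulTop {N M : ModuleCat.{u} B} {F : B} (hF : IsSMulRegular M F) {i : ℕ}
    (hi : Subsingleton (Ext N M i)) (hi' : Subsingleton (Ext N M (i + 1))) :
    Subsingleton (Ext N (ModuleCat.of B (QuotSMulTop F M)) i) :=
  AddCommGrpCat.subsingleton_of_isZero <| ShortComplex.Exact.isZero_of_both_zeros
    ((Ext.covariant_sequence_exact₃' _ hF.smulShortComplex_shortExact) i (i + 1) rfl)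
    ((AddCommGrpCat.isZero_of_iff_subsingleton.mpr hi).eq_zero_of_src _)
    ((AddCommGrpCat.isZero_of_iff_subsingleton.mpr hi').eq_zero_of_tgt _)

variable {k : Type u} [Field k] [Infinite k] [Algebra k B] [IsNoetherianRing B]

/-- Prime avoidance: a vector space over an infinite field is not the union of finitely many proper
subspaces. -/
lemma exists_mem_isSMulRegular_of_mem_span {M : Type*} [AddCommGroup M] [Module B M]
    [Module.Finite B M] {V : Submodule k B} {y : B} (hyV : y ∈ Ideal.span (V : Set B))
    (hy : IsSMulRegular M y) : ∃ F ∈ V, IsSMulRegular M F := by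
  by_contra! hcon
  have hass := biUnion_associatedPrimes_eq_compl_regular B M
  have : Finite (associatedPrimes B M) := associatedPrimes.finite B M
  obtain ⟨p, hp⟩ := Subspace.exists_eq_top_of_iUnion_eq_univ
    (p := fun p : associatedPrimes B M => (p.1.restrictScalars k).comap V.subtype) (by
      refine Set.eq_univ_of_forall fun F => Set.mem_iUnion.2 ?_
      have : F.1 ∈ {r : B | IsSMulRegular M r}ᶜ := hcon F F.2
      rw [← hass, Set.mem_iUnion₂] at this
      obtain ⟨p, hp, hF⟩ := this
      exact ⟨⟨p, hp⟩, hF⟩)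
  have hVp : Ideal.span (V : Set B) ≤ p.1 :=
    Ideal.span_le.2 fun F hF => (Submodule.eq_top_iff'.1 hp ⟨F, hF⟩ :)
  have : y ∈ {r : B | IsSMulRegular M r}ᶜ := hass ▸ Set.mem_iUnion₂.2 ⟨p.1, p.2, hVp hyV⟩
  exact this hy

lemma exists_isWeaklyRegular_of_subsingleton_ext {m : Ideal B} {V : Submodule k B} {D : ℕ}
    (hV : m ^ D ≤ Ideal.span (V : Set B)) {n : ℕ} (M : ModuleCat.{u} B) [Module.Finite B M]
    (hext : ∀ i < n, Subsingleton (Ext (ModuleCat.of B (B ⧸ m)) M i)) :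
    ∃ fs : List B, fs.length = n ∧ (∀ f ∈ fs, f ∈ V) ∧ IsWeaklyRegular M fs := by
  induction n generalizing M with
  | zero => exact ⟨[], rfl, by simp, .nil _ _⟩
  | succ n ih =>
    have : Subsingleton (ModuleCat.of B (B ⧸ m) ⟶ M) :=
      Ext.addEquiv₀.subsingleton_congr.mp (hext 0 n.succ_pos)
    have : Subsingleton ((B ⧸ m) →ₗ[B] M) :=
      (ModuleCat.homAddEquiv (M := ModuleCat.of B (B ⧸ m)) (N := M)).symm.subsingleton
    obtain ⟨y, hym, hy⟩ := IsSMulRegular.subsingleton_linearMap_iff.mp this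
    rw [Ideal.annihilator_quotient] at hym
    obtain ⟨F, hFV, hF⟩ :=
      exists_mem_isSMulRegular_of_mem_span (hV (Ideal.pow_mem_pow hym D)) (hy.pow D)
    obtain ⟨fs, hlen, hfs, hreg⟩ := ih (ModuleCat.of B (QuotSMulTop F M)) fun i hi =>
      subsingleton_ext_quotSMulTop hF (hext i (by omega)) (hext (i + 1) (by omega))
    exact ⟨F :: fs, by rw [List.length_cons, hlen], List.forall_mem_cons.2 ⟨hFV, hfs⟩,
      (isWeaklyRegular_cons_iff M F fs).2 ⟨hF, hreg⟩⟩

lemma exists_isWeaklyRegular_of_pow_le_span {g : ℕ} {V : Submodule k (MvPolynomial (Fin g) k)}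
    {D : ℕ} (hV : Ideal.span (Set.range (MvPolynomial.X : Fin g → MvPolynomial (Fin g) k)) ^ D ≤
      Ideal.span (V : Set (MvPolynomial (Fin g) k))) :
    ∃ fs : List (MvPolynomial (Fin g) k), fs.length = g ∧ (∀ f ∈ fs, f ∈ V) ∧
      IsWeaklyRegular (MvPolynomial (Fin g) k) fs := by
  let S := ModuleCat.of (MvPolynomial (Fin g) k) (MvPolynomial (Fin g) k)
  set m := Ideal.span (Set.range (MvPolynomial.X : Fin g → MvPolynomial (Fin g) k))
  have hlt : m • (⊤ : Submodule (MvPolynomial (Fin g) k) S) < ⊤ := by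
    rw [lt_top_iff_ne_top]
    exact (Ideal.mul_top m).trans_ne (span_range_X_ne_top k g)
  have hofList : Ideal.ofList (List.ofFn (MvPolynomial.X : Fin g → MvPolynomial (Fin g) k)) = m :=
    congrArg Ideal.span (Set.ext fun _ => List.mem_ofFn)
  have hreg : IsRegular S (List.ofFn (MvPolynomial.X : Fin g → MvPolynomial (Fin g) k)) :=
    ⟨isRegularFamily_X k g, hofList ▸ hlt.ne'⟩
  have hext := ModuleCat.subsingleton_ext_of_exists_isRegular m
    (ModuleCat.of (MvPolynomial (Fin g) k) (MvPolynomial (Fin g) k ⧸ m))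
    (by rw [Module.support_eq_zeroLocus]; erw [Ideal.annihilator_quotient]) S hlt _
    (fun r hr => hofList ▸ Ideal.subset_span hr) hreg
  rw [List.length_ofFn] at hext
  exact exists_isWeaklyRegular_of_subsingleton_ext hV S hext

end RegularForms

section HilbertFunctions

open MvPolynomial RingTheory.Sequence

attribute [local instance] MvPolynomial.gradedAlgebra

lemma homogeneousComponent_mul_of_le {A σ : Type*} [CommSemiring A] {F : MvPolynomial σ A} {j : ℕ}
    (hF : F.IsHomogeneous j) (c : MvPolynomial σ A) {d : ℕ} (h : j ≤ d) :
    homogeneousComponent d (c * F) = homogeneousComponent (d - j) c * F := by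
  have hmul := DirectSum.coe_decompose_mul_of_right_mem_of_le (homogeneousSubmodule σ A) (a := c)
    hF h
  exact (decomposition.decompose'_apply _ _).symm.trans
    (hmul.trans (congrArg (· * F) (decomposition.decompose'_apply _ _)))

lemma homogeneousComponent_mul_of_lt {A σ : Type*} [CommSemiring A] {F : MvPolynomial σ A} {j : ℕ}
    (hF : F.IsHomogeneous j) (c : MvPolynomial σ A) {d : ℕ} (h : d < j) :
    homogeneousComponent d (c * F) = 0 :=
  (decomposition.decompose'_apply _ _).symm.trans
    (DirectSum.coe_decompose_mul_of_right_mem_of_not_le (homogeneousSubmodule σ A) hF h.not_ge)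

lemma homogeneousComponent_eq_self {A σ : Type*} [CommSemiring A] {p : MvPolynomial σ A} {d : ℕ}
    (hp : p.IsHomogeneous d) : homogeneousComponent d p = p := by
  rw [homogeneousComponent_of_mem hp, if_pos rfl]

variable {k : Type*} [Field k] {g : ℕ}

instance finiteDimensional_homogeneousSubmodule (g d : ℕ) :
    FiniteDimensional k (homogeneousSubmodule (Fin g) k d) :=
  Module.Finite.iff_fg.2 (homogeneousSubmodule_fg (Fin g) k d)

lemma finrank_homogeneousSubmodule (g d : ℕ) :
    Module.finrank k (homogeneousSubmodule (Fin g) k d) = (exponents g d).card := by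
  have hset : {b : Fin g →₀ ℕ | b.degree = d} = exponents g d := by
    ext b
    rw [Set.mem_ofPred_eq, Finset.mem_coe, mem_exponents, Finsupp.degree_eq_sum]
  rw [homogeneousSubmodule_eq_finsupp_supported, hset]
  exact (Module.finrank_eq_card_basis (basisRestrictSupport k _)).trans (Fintype.card_coe _)

/-- The degree `d` part of an ideal of the polynomial ring. -/
noncomputable def gradedPart (a : Ideal (MvPolynomial (Fin g) k)) (d : ℕ) :
    Submodule k (MvPolynomial (Fin g) k) :=
  a.restrictScalars k ⊓ homogeneousSubmodule (Fin g) k d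

lemma gradedPart_le (a : Ideal (MvPolynomial (Fin g) k)) (d : ℕ) :
    gradedPart a d ≤ homogeneousSubmodule (Fin g) k d := inf_le_right

instance finiteDimensional_gradedPart (a : Ideal (MvPolynomial (Fin g) k)) (d : ℕ) :
    FiniteDimensional k (gradedPart a d) :=
  Submodule.finiteDimensional_of_le (gradedPart_le a d)

lemma gradedPart_bot (d : ℕ) : gradedPart (⊥ : Ideal (MvPolynomial (Fin g) k)) d = ⊥ :=
  bot_inf_eq _

section SupSpanSingleton

variable {a : Ideal (MvPolynomial (Fin g) k)} {F : MvPolynomial (Fin g) k} {j : ℕ}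

lemma gradedPart_sup_span_singleton_of_lt (ha : a.IsHomogeneous (homogeneousSubmodule (Fin g) k))
    (hF : F.IsHomogeneous j) {d : ℕ} (hd : d < j) :
    gradedPart (a ⊔ Ideal.span {F}) d = gradedPart a d := by
  refine le_antisymm ?_ fun p hp => ⟨Ideal.mem_sup_left hp.1, hp.2⟩
  rintro p ⟨hp, hpd⟩
  obtain ⟨y, hy, z, hz, rfl⟩ := Submodule.mem_sup.1 hp
  obtain ⟨c, rfl⟩ := Ideal.mem_span_singleton'.1 hz
  refine ⟨?_, hpd⟩
  rw [← homogeneousComponent_eq_self hpd, map_add, homogeneousComponent_mul_of_lt hF c hd,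
    add_zero]
  exact homogeneousComponent_mem_of_mem ha hy d

lemma gradedPart_sup_span_singleton (ha : a.IsHomogeneous (homogeneousSubmodule (Fin g) k))
    (hF : F.IsHomogeneous j) (d : ℕ) :
    gradedPart (a ⊔ Ideal.span {F}) (d + j) =
      gradedPart a (d + j) ⊔ (homogeneousSubmodule (Fin g) k d).map (LinearMap.mulRight k F) := by
  refine le_antisymm ?_ (sup_le (fun p hp => ⟨Ideal.mem_sup_left hp.1, hp.2⟩) ?_)
  · rintro p ⟨hp, hpd⟩
    obtain ⟨y, hy, z, hz, rfl⟩ := Submodule.mem_sup.1 hp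
    obtain ⟨c, rfl⟩ := Ideal.mem_span_singleton'.1 hz
    rw [← homogeneousComponent_eq_self hpd, map_add,
      homogeneousComponent_mul_of_le hF c (Nat.le_add_left j d), Nat.add_sub_cancel]
    exact Submodule.add_mem_sup
      ⟨homogeneousComponent_mem_of_mem ha hy _, homogeneousComponent_isHomogeneous _ _⟩
      ⟨_, homogeneousComponent_isHomogeneous _ _, rfl⟩
  · rintro _ ⟨c, hc, rfl⟩
    exact ⟨Ideal.mem_sup_right (Ideal.mul_mem_left _ c (Ideal.mem_span_singleton_self F)),
      IsHomogeneous.mul hc hF⟩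

lemma gradedPart_inf_map_mulRight (hF : F.IsHomogeneous j) (hreg : ∀ c, F * c ∈ a → c ∈ a)
    (d : ℕ) :
    gradedPart a (d + j) ⊓ (homogeneousSubmodule (Fin g) k d).map (LinearMap.mulRight k F) =
      (gradedPart a d).map (LinearMap.mulRight k F) := by
  refine le_antisymm ?_ ?_
  · rintro _ ⟨hp, c, hc, rfl⟩
    exact ⟨c, ⟨hreg c (mul_comm c F ▸ hp.1), hc⟩, rfl⟩
  · rintro _ ⟨c, hc, rfl⟩
    exact ⟨⟨Ideal.mul_mem_right _ _ hc.1, IsHomogeneous.mul hc.2 hF⟩, c, hc.2, rfl⟩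

lemma finrank_gradedPart_sup_span_singleton
    (ha : a.IsHomogeneous (homogeneousSubmodule (Fin g) k)) (ha' : a ≠ ⊤)
    (hF : F.IsHomogeneous j) (hreg : ∀ c, F * c ∈ a → c ∈ a) (d : ℕ) :
    Module.finrank k (gradedPart (a ⊔ Ideal.span {F}) (d + j)) +
        Module.finrank k (gradedPart a d) =
      Module.finrank k (gradedPart a (d + j)) +
        Module.finrank k (homogeneousSubmodule (Fin g) k d) := by
  have hF0 : F ≠ 0 := by
    rintro rfl
    exact ha' ((Ideal.eq_top_iff_one _).2 (hreg 1 (by simp)))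
  have hinj : Function.Injective (LinearMap.mulRight k F) := fun _ _ h => mul_right_cancel₀ hF0 h
  have hmap (S : Submodule k (MvPolynomial (Fin g) k)) :
      Module.finrank k (S.map (LinearMap.mulRight k F)) = Module.finrank k S :=
    (S.equivMapOfInjective _ hinj).finrank_eq.symm
  have hdim := Submodule.finrank_sup_add_finrank_inf_eq (gradedPart a (d + j))
    ((homogeneousSubmodule (Fin g) k d).map (LinearMap.mulRight k F))
  rwa [← gradedPart_sup_span_singleton ha hF, gradedPart_inf_map_mulRight hF hreg, hmap,
    hmap] at hdim

end SupSpanSingleton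

/-- The Hilbert function of the quotient of the polynomial ring by `a`, with integer values. -/
noncomputable def hilbertFunction (a : Ideal (MvPolynomial (Fin g) k)) (d : ℕ) : ℤ :=
  Module.finrank k (homogeneousSubmodule (Fin g) k d) - Module.finrank k (gradedPart a d)

lemma mk_hilbertFunction_sup_span_singleton {a : Ideal (MvPolynomial (Fin g) k)}
    (ha : a.IsHomogeneous (homogeneousSubmodule (Fin g) k)) (ha' : a ≠ ⊤)
    {F : MvPolynomial (Fin g) k} {j : ℕ} (hF : F.IsHomogeneous j)
    (hreg : ∀ c, F * c ∈ a → c ∈ a) :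
    PowerSeries.mk (hilbertFunction (a ⊔ Ideal.span {F})) =
      PowerSeries.mk (hilbertFunction a) * (1 - PowerSeries.X ^ j) := by
  ext d
  rw [mul_sub, mul_one, map_sub, PowerSeries.coeff_mul_X_pow', PowerSeries.coeff_mk,
    PowerSeries.coeff_mk]
  split_ifs with h
  · obtain ⟨e, rfl⟩ := Nat.exists_eq_add_of_le' h
    have hdim := finrank_gradedPart_sup_span_singleton ha ha' hF hreg e
    rw [Nat.add_sub_cancel, PowerSeries.coeff_mk]
    unfold hilbertFunction
    lia
  · rw [sub_zero, hilbertFunction, hilbertFunction,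
      gradedPart_sup_span_singleton_of_lt ha hF (not_le.1 h)]

lemma mk_hilbertFunction_bot_mul (hg : 1 ≤ g) :
    PowerSeries.mk (hilbertFunction (⊥ : Ideal (MvPolynomial (Fin g) k))) *
      (1 - PowerSeries.X) ^ g = 1 := by
  have h : hilbertFunction (⊥ : Ideal (MvPolynomial (Fin g) k)) =
      fun n => (((g - 1 + n).choose (g - 1) : ℕ) : ℤ) := by
    ext d
    rw [hilbertFunction, gradedPart_bot, finrank_bot, finrank_homogeneousSubmodule,
      card_exponents hg, Nat.cast_zero, sub_zero]
  have hinv := PowerSeries.mk_add_choose_mul_one_sub_pow_eq_one ℤ (g - 1)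
  rwa [Nat.sub_add_cancel hg, ← h] at hinv

section CompleteIntersections

variable {fs : List (MvPolynomial (Fin g) k)}

lemma isHomogeneous_ofList {s : ℕ} (hfs : ∀ f ∈ fs, f.IsHomogeneous s) :
    (Ideal.ofList fs).IsHomogeneous (homogeneousSubmodule (Fin g) k) :=
  Ideal.homogeneous_span _ _ fun f hf => ⟨s, hfs f hf⟩

lemma ofList_ne_top_of_isHomogeneous {s : ℕ} (hs : s ≠ 0) (hfs : ∀ f ∈ fs, f.IsHomogeneous s) :
    Ideal.ofList fs ≠ ⊤ := by
  have hker : Ideal.ofList fs ≤ RingHom.ker (constantCoeff (R := k) (σ := Fin g)) :=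
    Ideal.span_le.2 fun f hf => (hfs f hf).coeff_eq_zero (by simpa using hs.symm)
  exact ne_top_of_le_ne_top (RingHom.ker_ne_top _) hker

lemma ofList_append_singleton {A : Type*} [CommSemiring A] (l : List A) (a : A) :
    Ideal.ofList (l ++ [a]) = Ideal.ofList l ⊔ Ideal.span {a} := by
  rw [Ideal.ofList_append, Ideal.ofList_singleton]

lemma mk_hilbertFunction_ofList {s : ℕ} (hs : s ≠ 0) (hfs : ∀ f ∈ fs, f.IsHomogeneous s)
    (hreg : IsWeaklyRegular (MvPolynomial (Fin g) k) fs) :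
    PowerSeries.mk (hilbertFunction (Ideal.ofList fs)) =
      PowerSeries.mk (hilbertFunction (⊥ : Ideal (MvPolynomial (Fin g) k))) *
        (1 - PowerSeries.X ^ s) ^ fs.length := by
  induction fs using List.reverseRecOn with
  | nil => simp
  | append_singleton l f ih =>
    rw [List.forall_mem_append, List.forall_mem_singleton] at hfs
    obtain ⟨hl, hf⟩ := (isWeaklyRegular_append_singleton_iff l f).1 hreg
    rw [ofList_append_singleton, mk_hilbertFunction_sup_span_singleton
      (isHomogeneous_ofList hfs.1) (ofList_ne_top_of_isHomogeneous hs hfs.1) hfs.2 hf,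
      ih hfs.1 hl, List.length_append, List.length_singleton, mul_assoc, ← pow_succ]

lemma finrank_homogeneousSubmodule_zero :
    Module.finrank k (homogeneousSubmodule (Fin g) k 0) = 1 := by
  rw [finrank_homogeneousSubmodule, exponents, Finset.finsuppAntidiag_zero, Finset.card_singleton]

lemma gradedPart_zero_ofList {s : ℕ} (hs : s ≠ 0) (hfs : ∀ f ∈ fs, f.IsHomogeneous s) :
    gradedPart (Ideal.ofList fs) 0 = ⊥ := by
  induction fs using List.reverseRecOn with
  | nil => rw [Ideal.ofList_nil, gradedPart_bot]
  | append_singleton l f ih =>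
    rw [List.forall_mem_append, List.forall_mem_singleton] at hfs
    rw [ofList_append_singleton, gradedPart_sup_span_singleton_of_lt (isHomogeneous_ofList hfs.1)
      hfs.2 hs.pos, ih hfs.1]

lemma finrank_gradedPart_ofList {s : ℕ} (hs : s ≠ 0) (hfs : ∀ f ∈ fs, f.IsHomogeneous s)
    (hreg : IsWeaklyRegular (MvPolynomial (Fin g) k) fs) :
    Module.finrank k (gradedPart (Ideal.ofList fs) s) = fs.length := by
  induction fs using List.reverseRecOn with
  | nil => rw [Ideal.ofList_nil, gradedPart_bot, finrank_bot, List.length_nil]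
  | append_singleton l f ih =>
    rw [List.forall_mem_append, List.forall_mem_singleton] at hfs
    obtain ⟨hl, hf⟩ := (isWeaklyRegular_append_singleton_iff l f).1 hreg
    have hdim := finrank_gradedPart_sup_span_singleton (isHomogeneous_ofList hfs.1)
      (ofList_ne_top_of_isHomogeneous hs hfs.1) hfs.2 hf 0
    rw [zero_add, gradedPart_zero_ofList hs hfs.1, finrank_bot, ih hfs.1 hl,
      finrank_homogeneousSubmodule_zero, add_zero] at hdim
    rw [ofList_append_singleton, hdim, List.length_append, List.length_singleton]

lemma natDegree_geom_sum_X (s : ℕ) :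
    (∑ i ∈ Finset.range (s + 1), Polynomial.X ^ i : Polynomial ℤ).natDegree = s := by
  have h := congrArg Polynomial.natDegree (mul_geom_sum (Polynomial.X : Polynomial ℤ) (s + 1))
  rw [← Polynomial.C_1, (Polynomial.monic_X_sub_C 1).natDegree_mul
    (Polynomial.monic_geom_sum_X s.succ_ne_zero), Polynomial.natDegree_X_sub_C,
    Polynomial.natDegree_X_pow_sub_C] at h
  lia

lemma mk_hilbertFunction_ofList_eq_geom_sum_pow {s : ℕ} (hg : 1 ≤ g) (hlen : fs.length = g)
    (hfs : ∀ f ∈ fs, f.IsHomogeneous (s + 1))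
    (hreg : IsWeaklyRegular (MvPolynomial (Fin g) k) fs) :
    PowerSeries.mk (hilbertFunction (Ideal.ofList fs)) =
      ((∑ i ∈ Finset.range (s + 1), Polynomial.X ^ i : Polynomial ℤ) ^ g : Polynomial ℤ) := by
  have hgeom : (1 - PowerSeries.X ^ (s + 1) : PowerSeries ℤ) = (1 - PowerSeries.X) *
      ((∑ i ∈ Finset.range (s + 1), Polynomial.X ^ i : Polynomial ℤ) : PowerSeries ℤ) := by
    have h := congrArg (Polynomial.coeToPowerSeries.ringHom (R := ℤ))
      (mul_neg_geom_sum (Polynomial.X : Polynomial ℤ) (s + 1))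
    simpa using h.symm
  rw [mk_hilbertFunction_ofList s.succ_ne_zero hfs hreg, hlen, hgeom, mul_pow, ← mul_assoc,
    mk_hilbertFunction_bot_mul hg, one_mul, Polynomial.coe_pow]

lemma finrank_gradedPart_ofList_socle {s : ℕ} (hg : 1 ≤ g) (hlen : fs.length = g)
    (hfs : ∀ f ∈ fs, f.IsHomogeneous (s + 1))
    (hreg : IsWeaklyRegular (MvPolynomial (Fin g) k) fs) :
    Module.finrank k (gradedPart (Ideal.ofList fs) (g * s)) + 1 =
      Module.finrank k (homogeneousSubmodule (Fin g) k (g * s)) := by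
  have hmonic := (Polynomial.monic_geom_sum_X (R := ℤ) s.succ_ne_zero).pow g
  have hdeg := (Polynomial.monic_geom_sum_X (R := ℤ) s.succ_ne_zero).natDegree_pow g
  rw [natDegree_geom_sum_X] at hdeg
  have hcoeff := congrArg (PowerSeries.coeff (g * s))
    (mk_hilbertFunction_ofList_eq_geom_sum_pow hg hlen hfs hreg)
  rw [PowerSeries.coeff_mk, Polynomial.coeff_coe, ← hdeg, hmonic.coeff_natDegree, hdeg,
    hilbertFunction] at hcoeff
  lia

lemma gradedPart_ofList_eq_homogeneousSubmodule {s : ℕ} (hg : 1 ≤ g) (hlen : fs.length = g)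
    (hfs : ∀ f ∈ fs, f.IsHomogeneous (s + 1))
    (hreg : IsWeaklyRegular (MvPolynomial (Fin g) k) fs) :
    gradedPart (Ideal.ofList fs) (g * s + 1) = homogeneousSubmodule (Fin g) k (g * s + 1) := by
  have hdeg := (Polynomial.monic_geom_sum_X (R := ℤ) s.succ_ne_zero).natDegree_pow g
  rw [natDegree_geom_sum_X] at hdeg
  have hcoeff := congrArg (PowerSeries.coeff (g * s + 1))
    (mk_hilbertFunction_ofList_eq_geom_sum_pow hg hlen hfs hreg)
  rw [PowerSeries.coeff_mk, Polynomial.coeff_coe,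
    Polynomial.coeff_eq_zero_of_natDegree_lt (hdeg.trans_lt (Nat.lt_succ_self _)),
    hilbertFunction] at hcoeff
  exact Submodule.eq_of_le_of_finrank_eq (gradedPart_le _ _) (by lia)

lemma exists_homogeneousSubmodule_eq_gradedPart_sup {s : ℕ} (hg : 1 ≤ g) (hlen : fs.length = g)
    (hfs : ∀ f ∈ fs, f.IsHomogeneous (s + 1))
    (hreg : IsWeaklyRegular (MvPolynomial (Fin g) k) fs) :
    ∃ F ∈ homogeneousSubmodule (Fin g) k (g * s), homogeneousSubmodule (Fin g) k (g * s) =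
      gradedPart (Ideal.ofList fs) (g * s) ⊔ Submodule.span k {F} := by
  have hdim := finrank_gradedPart_ofList_socle hg hlen hfs hreg
  obtain ⟨F, hF, hF'⟩ : ∃ F ∈ homogeneousSubmodule (Fin g) k (g * s),
      F ∉ gradedPart (Ideal.ofList fs) (g * s) := by
    by_contra! hle
    have := Submodule.finrank_mono hle
    lia
  have hsup : gradedPart (Ideal.ofList fs) (g * s) ⊔ Submodule.span k {F} ≤
      homogeneousSubmodule (Fin g) k (g * s) :=
    sup_le (gradedPart_le _ _) ((Submodule.span_singleton_le_iff_mem _ _).2 hF)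
  have hlt := Submodule.finrank_lt_finrank_of_lt (left_lt_sup.2 fun h =>
    hF' ((Submodule.span_singleton_le_iff_mem _ _).1 h))
  exact ⟨F, hF, (Submodule.eq_of_le_of_finrank_le hsup (by lia)).symm⟩

end CompleteIntersections

end HilbertFunctions

section InitialForms

open MvPolynomial RingTheory.Sequence

lemma exists_isHomogeneous_map_eq {σ A K : Type*} [CommSemiring A] [CommSemiring K] {f : A →+* K}
    (hf : Function.Surjective f) {F : MvPolynomial σ K} {d : ℕ} (hF : F.IsHomogeneous d) :
    ∃ P : MvPolynomial σ A, P.IsHomogeneous d ∧ map f P = F := by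
  obtain ⟨P, rfl⟩ := map_surjective (σ := σ) f hf F
  refine ⟨homogeneousComponent d P, homogeneousComponent_isHomogeneous d P, ?_⟩
  ext b
  rw [coeff_map, coeff_homogeneousComponent]
  split_ifs with hb
  · rw [coeff_map]
  · rw [map_zero, hF.coeff_eq_zero hb]

variable {R : Type u} [CommRing R] [IsLocalRing R] {g : ℕ}

/-- The forms of degree `d` over the residue field that lift to a form over `R` whose value at `x`
lies in `J`. For a regular sequence `x` with `I = (x)`, these are the images in `I ^ d / m I ^ d` of
the elements of `J ∩ I ^ d`. -/
noncomputable def initialForms (x : Fin g → R) (J : Ideal R) (d : ℕ) :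
    Submodule (ResidueField R) (MvPolynomial (Fin g) (ResidueField R)) where
  carrier := {F | ∃ P : MvPolynomial (Fin g) R, P.IsHomogeneous d ∧ eval x P ∈ J ∧
    map (residue R) P = F}
  add_mem' := by
    rintro _ _ ⟨P, hP, hPJ, rfl⟩ ⟨Q, hQ, hQJ, rfl⟩
    exact ⟨P + Q, hP.add hQ, by rw [map_add]; exact J.add_mem hPJ hQJ, map_add _ _ _⟩
  zero_mem' := ⟨0, isHomogeneous_zero _ _ _, by rw [map_zero]; exact J.zero_mem, map_zero _⟩
  smul_mem' := by
    rintro c _ ⟨P, hP, hPJ, rfl⟩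
    obtain ⟨r, rfl⟩ := residue_surjective c
    exact ⟨C r * P, hP.C_mul r, by rw [map_mul]; exact J.mul_mem_left _ hPJ,
      by rw [map_mul, map_C, smul_eq_C_mul]⟩

lemma initialForms_le (x : Fin g → R) (J : Ideal R) (d : ℕ) :
    initialForms x J d ≤ homogeneousSubmodule (Fin g) (ResidueField R) d := by
  rintro _ ⟨P, hP, -, rfl⟩
  exact hP.map _

instance finiteDimensional_initialForms (x : Fin g → R) (J : Ideal R) (d : ℕ) :
    FiniteDimensional (ResidueField R) (initialForms x J d) :=
  Submodule.finiteDimensional_of_le (initialForms_le x J d)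

lemma initialForms_mono (x : Fin g → R) {J J' : Ideal R} (h : J ≤ J') (d : ℕ) :
    initialForms x J d ≤ initialForms x J' d := by
  rintro _ ⟨P, hP, hPJ, rfl⟩
  exact ⟨P, hP, h hPJ, rfl⟩

lemma mul_mem_initialForms {x : Fin g → R} {J : Ideal R} {d e : ℕ}
    {F c : MvPolynomial (Fin g) (ResidueField R)} (hF : F ∈ initialForms x J d)
    (hc : c.IsHomogeneous e) : c * F ∈ initialForms x J (e + d) := by
  obtain ⟨P, hP, hPJ, rfl⟩ := hF
  obtain ⟨Q, hQ, rfl⟩ := exists_isHomogeneous_map_eq residue_surjective hc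
  exact ⟨Q * P, hQ.mul hP, by rw [map_mul]; exact J.mul_mem_left _ hPJ, map_mul _ _ _⟩

lemma gradedPart_span_initialForms_le (x : Fin g → R) (J : Ideal R) (j d : ℕ) :
    gradedPart (Ideal.span (initialForms x J j : Set (MvPolynomial (Fin g) (ResidueField R)))) d ≤
      initialForms x J d := by
  rintro p ⟨hp, hpd⟩
  rw [← homogeneousComponent_eq_self hpd]
  obtain ⟨n, c, F, rfl⟩ := Submodule.mem_span_set'.1 hp
  rw [map_sum]
  refine Submodule.sum_mem _ fun i _ => ?_
  have hF := initialForms_le x J j (F i).2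
  rw [smul_eq_mul]
  rcases lt_or_ge d j with h | h
  · rw [homogeneousComponent_mul_of_lt hF _ h]
    exact Submodule.zero_mem _
  · rw [homogeneousComponent_mul_of_le hF _ h]
    have := mul_mem_initialForms (F i).2 (homogeneousComponent_isHomogeneous (d - j) (c i))
    rwa [Nat.sub_add_cancel h] at this

lemma exists_map_residue_mem_span_initialForms {x : Fin g → R} {J : Ideal R} {j e : ℕ}
    (hJ : J ≤ Ideal.span (Set.range x) ^ j) {y : R}
    (hy : y ∈ J * Ideal.span (Set.range x) ^ e) :
    ∃ P : MvPolynomial (Fin g) R, P.IsHomogeneous (j + e) ∧ eval x P = y ∧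
      map (residue R) P ∈
        Ideal.span (initialForms x J j : Set (MvPolynomial (Fin g) (ResidueField R))) := by
  induction hy using Submodule.mul_induction_on' with
  | mem_mul_mem a ha b hb =>
    obtain ⟨P, hP, rfl⟩ := (Ideal.mem_span_pow_iff_exists_isHomogeneous _ _).1 (hJ ha)
    obtain ⟨Q, hQ, rfl⟩ := (Ideal.mem_span_pow_iff_exists_isHomogeneous _ _).1 hb
    refine ⟨P * Q, hP.mul hQ, map_mul _ _ _, ?_⟩
    rw [map_mul]
    exact Ideal.mul_mem_right _ _ (Ideal.subset_span ⟨P, hP, ha, rfl⟩)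
  | add a _ b _ ha hb =>
    obtain ⟨P, hP, rfl, hPspan⟩ := ha
    obtain ⟨Q, hQ, rfl, hQspan⟩ := hb
    exact ⟨P + Q, hP.add hQ, map_add _ _ _, by rw [map_add]; exact Ideal.add_mem _ hPspan hQspan⟩

lemma le_of_le_sup_maximalIdeal_smul {M : Type*} [AddCommGroup M] [Module R M]
    {N N' : Submodule R M} (hN' : N'.FG) (h : N' ≤ N ⊔ maximalIdeal R • N') : N' ≤ N :=
  Submodule.le_of_le_smul_of_le_jacobson_bot hN' (IsLocalRing.maximalIdeal_le_jacobson _) h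

variable [IsNoetherianRing R]

lemma span_pow_le_of_homogeneousSubmodule_le_initialForms {x : Fin g → R} {J : Ideal R} {d : ℕ}
    (h : homogeneousSubmodule (Fin g) (ResidueField R) d ≤ initialForms x J d) :
    Ideal.span (Set.range x) ^ d ≤ J := by
  refine le_of_le_sup_maximalIdeal_smul (IsNoetherian.noetherian _) fun y hy => ?_
  obtain ⟨Q, hQ, rfl⟩ := (Ideal.mem_span_pow_iff_exists_isHomogeneous _ _).1 hy
  obtain ⟨P, hP, hPJ, hPQ⟩ := h (hQ.map (residue R))
  have hdiff : eval x (Q - P) ∈ maximalIdeal R • Ideal.span (Set.range x) ^ d := by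
    rw [eval_eq_sum_exponents x (hQ.sub hP)]
    refine Ideal.sum_mem _ fun b hb => Ideal.mul_mem_mul ?_
      (prod_pow_mem_span_pow x (mem_exponents.1 hb))
    rw [← residue_eq_zero_iff, coeff_sub, map_sub, ← coeff_map, ← coeff_map, hPQ, sub_self]
  rw [map_sub] at hdiff
  have := Submodule.add_mem_sup hPJ hdiff
  rwa [add_sub_cancel] at this

lemma span_X_pow_le_span_initialForms {x : Fin g → R} (hx : ∀ i, x i ∈ maximalIdeal R)
    (h : IsRegularFamily x) {J : Ideal R} {j : ℕ}
    (hJ : IsReduction J (Ideal.span (Set.range x) ^ j)) :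
    ∃ D, Ideal.span (Set.range (X : Fin g → MvPolynomial (Fin g) (ResidueField R))) ^ D ≤
      Ideal.span (initialForms x J j : Set (MvPolynomial (Fin g) (ResidueField R))) := by
  obtain ⟨hJI, r, hr⟩ := hJ
  rw [← pow_mul, ← pow_mul, mul_add, mul_one, add_comm] at hr
  refine ⟨j + j * r, fun y hy => ?_⟩
  obtain ⟨F, hF, rfl⟩ := (Ideal.mem_span_pow_iff_exists_isHomogeneous _ _).1 hy
  rw [eval_eq_sum_exponents X hF]
  refine Ideal.sum_mem _ fun b hb => Ideal.mul_mem_left _ _ ?_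
  have hmon : (∏ i, X i ^ b i : MvPolynomial (Fin g) (ResidueField R)).IsHomogeneous
      (j + j * r) := by
    rw [← mem_exponents.1 hb]
    exact IsHomogeneous.prod _ _ _ fun i _ => isHomogeneous_X_pow i (b i)
  obtain ⟨Q, hQ, hQmon⟩ := exists_isHomogeneous_map_eq residue_surjective hmon
  rw [← hQmon]
  obtain ⟨P, hP, heval, hspan⟩ := exists_map_residue_mem_span_initialForms hJI
    (hr ▸ eval_mem_span_pow x hQ)
  rwa [← map_residue_eq_of_eval_eq hx h hP hQ heval]

variable [Infinite (ResidueField R)]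

lemma IsReduction.exists_isWeaklyRegular {x : Fin g → R} (hx : ∀ i, x i ∈ maximalIdeal R)
    (h : IsRegularFamily x) {J : Ideal R} {j : ℕ}
    (hJ : IsReduction J (Ideal.span (Set.range x) ^ j)) :
    ∃ fs : List (MvPolynomial (Fin g) (ResidueField R)), fs.length = g ∧
      (∀ f ∈ fs, f.IsHomogeneous j) ∧ IsWeaklyRegular (MvPolynomial (Fin g) (ResidueField R)) fs ∧
      ∀ d, gradedPart (Ideal.ofList fs) d ≤ initialForms x J d := by
  obtain ⟨D, hD⟩ := span_X_pow_le_span_initialForms hx h hJ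
  obtain ⟨fs, hlen, hfs, hreg⟩ := exists_isWeaklyRegular_of_pow_le_span hD
  refine ⟨fs, hlen, fun f hf => initialForms_le x J j (hfs f hf), hreg, fun d p hp =>
    gradedPart_span_initialForms_le x J j d ⟨?_, hp.2⟩⟩
  exact Ideal.span_mono (t := initialForms x J j) (fun f hf => hfs f hf) hp.1

variable {x : Fin g → R} {J : Ideal R} {s : ℕ}

lemma IsReduction.le_finrank_initialForms (hx : ∀ i, x i ∈ maximalIdeal R)
    (h : IsRegularFamily x) (hJ : IsReduction J (Ideal.span (Set.range x) ^ (s + 1))) :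
    g ≤ Module.finrank (ResidueField R) (initialForms x J (s + 1)) := by
  obtain ⟨fs, hlen, hfs, hreg, hle⟩ := hJ.exists_isWeaklyRegular hx h
  calc g = Module.finrank _ (gradedPart (Ideal.ofList fs) (s + 1)) := by
        rw [finrank_gradedPart_ofList s.succ_ne_zero hfs hreg, hlen]
    _ ≤ _ := Submodule.finrank_mono (hle _)

lemma IsReduction.span_pow_le (hg : 1 ≤ g) (hx : ∀ i, x i ∈ maximalIdeal R)
    (h : IsRegularFamily x) (hJ : IsReduction J (Ideal.span (Set.range x) ^ (s + 1))) :
    Ideal.span (Set.range x) ^ (g * s + 1) ≤ J := by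
  obtain ⟨fs, hlen, hfs, hreg, hle⟩ := hJ.exists_isWeaklyRegular hx h
  refine span_pow_le_of_homogeneousSubmodule_le_initialForms ?_
  rw [← gradedPart_ofList_eq_homogeneousSubmodule hg hlen hfs hreg]
  exact hle _

lemma IsReduction.exists_span_pow_le_sup (hg : 1 ≤ g) (hx : ∀ i, x i ∈ maximalIdeal R)
    (h : IsRegularFamily x) (hJ : IsReduction J (Ideal.span (Set.range x) ^ (s + 1))) :
    ∃ δ ∈ Ideal.span (Set.range x) ^ (g * s),
      Ideal.span (Set.range x) ^ (g * s) ≤ J ⊔ Ideal.span {δ} := by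
  obtain ⟨fs, hlen, hfs, hreg, hle⟩ := hJ.exists_isWeaklyRegular hx h
  obtain ⟨F, hF, hsup⟩ := exists_homogeneousSubmodule_eq_gradedPart_sup hg hlen hfs hreg
  obtain ⟨Q, hQ, rfl⟩ := exists_isHomogeneous_map_eq residue_surjective hF
  refine ⟨eval x Q, eval_mem_span_pow x hQ,
    span_pow_le_of_homogeneousSubmodule_le_initialForms ?_⟩
  rw [hsup]
  refine sup_le ((hle _).trans (initialForms_mono x le_sup_left _))
    ((Submodule.span_singleton_le_iff_mem _ _).2 ?_)
  exact ⟨Q, hQ, Ideal.mem_sup_right (Ideal.mem_span_singleton_self _), rfl⟩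

end InitialForms

section Minimality

open MvPolynomial

variable {R : Type u} [CommRing R] [IsNoetherianRing R] [IsLocalRing R] {g : ℕ} {x : Fin g → R}

lemma map_residue_eq_sum_of_eval_eq_sum {ι : Type*} [Fintype ι] (hx : ∀ i, x i ∈ maximalIdeal R)
    (h : IsRegularFamily x) {F : ι → MvPolynomial (Fin g) R} {P : MvPolynomial (Fin g) R} {d : ℕ}
    (hF : ∀ i, (F i).IsHomogeneous d) (hP : P.IsHomogeneous d) {a : ι → R}
    (heval : ∑ i, a i * eval x (F i) = eval x P) :
    map (residue R) P = ∑ i, residue R (a i) • map (residue R) (F i) := by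
  have hQ : (∑ i, C (a i) * F i).IsHomogeneous d :=
    IsHomogeneous.sum _ _ _ fun i _ => (hF i).C_mul _
  rw [map_residue_eq_of_eval_eq hx h hP hQ (by simp only [map_sum, map_mul, eval_C, heval])]
  simp only [map_sum, map_mul, map_C, smul_eq_C_mul]

lemma initialForms_span_range_eval_le {ι : Type*} [Finite ι] (hx : ∀ i, x i ∈ maximalIdeal R)
    (h : IsRegularFamily x) {F : ι → MvPolynomial (Fin g) R} {d : ℕ}
    (hF : ∀ i, (F i).IsHomogeneous d) :
    initialForms x (Ideal.span (Set.range fun i => eval x (F i))) d ≤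
      Submodule.span (ResidueField R) (Set.range fun i => map (residue R) (F i)) := by
  have := Fintype.ofFinite ι
  rintro _ ⟨P, hP, hPmem, rfl⟩
  obtain ⟨a, ha⟩ := Ideal.mem_span_range_iff_exists_fun.1 hPmem
  rw [map_residue_eq_sum_of_eval_eq_sum hx h hF hP ha]
  exact Submodule.sum_mem _ fun i _ =>
    Submodule.smul_mem _ _ (Submodule.subset_span (Set.mem_range_self i))

lemma le_of_map_residue_mem_initialForms {ι : Type*} [Finite ι]
    (hx : ∀ i, x i ∈ maximalIdeal R) (h : IsRegularFamily x) {F : ι → MvPolynomial (Fin g) R}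
    {d : ℕ} (hF : ∀ i, (F i).IsHomogeneous d)
    (hli : LinearIndependent (ResidueField R) fun i => map (residue R) (F i)) {J : Ideal R}
    (hle : J ≤ Ideal.span (Set.range fun i => eval x (F i)))
    (hmem : ∀ i, map (residue R) (F i) ∈ initialForms x J d) :
    Ideal.span (Set.range fun i => eval x (F i)) ≤ J := by
  have := Fintype.ofFinite ι
  refine le_of_le_sup_maximalIdeal_smul (IsNoetherian.noetherian _)
    (Ideal.span_le.2 (Set.range_subset_iff.2 fun i => ?_))
  obtain ⟨P, hP, hPJ, hPF⟩ := hmem i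
  obtain ⟨a, ha⟩ := Ideal.mem_span_range_iff_exists_fun.1
    (sub_mem (Ideal.subset_span (Set.mem_range_self i)) (hle hPJ))
  have hzero : ∑ l, residue R (a l) • map (residue R) (F l) = 0 := by
    rw [← map_residue_eq_sum_of_eval_eq_sum hx h hF ((hF i).sub hP) (ha.trans (map_sub _ _ _).symm),
      map_sub, hPF, sub_self]
  have hdiff : eval x (F i) - eval x P ∈
      maximalIdeal R • Ideal.span (Set.range fun i => eval x (F i)) := by
    rw [← ha]
    exact Ideal.sum_mem _ fun l _ => Ideal.mul_mem_mul
      ((residue_eq_zero_iff _).1 (Fintype.linearIndependent_iff.1 hli _ hzero l))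
      (Ideal.subset_span (Set.mem_range_self l))
  have := Submodule.add_mem_sup hPJ hdiff
  rwa [add_sub_cancel] at this

variable [Infinite (ResidueField R)]

/-- The initial forms of degree `s + 1` of any reduction span at least `g` dimensions, so those of a
reduction contained in `(f)` already fill the span of the `g` initial forms of the `f i`. -/
lemma isMinimalReduction_span_range (hx : ∀ i, x i ∈ maximalIdeal R) (h : IsRegularFamily x)
    {s : ℕ} {f : Fin g → R}
    (hJ : IsReduction (Ideal.span (Set.range f)) (Ideal.span (Set.range x) ^ (s + 1))) :
    IsMinimalReduction (Ideal.span (Set.range f)) (Ideal.span (Set.range x) ^ (s + 1)) := by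
  refine ⟨hJ, fun J' hJ' hle => le_antisymm hle ?_⟩
  choose F hF heval using fun i => (Ideal.mem_span_pow_iff_exists_isHomogeneous _ _).1
    (hJ.1 (Ideal.subset_span (Set.mem_range_self i)))
  obtain rfl : (fun i => eval x (F i)) = f := funext heval
  have hforms := (initialForms_mono x hle (s + 1)).trans (initialForms_span_range_eval_le hx h hF)
  have hlower := hJ'.le_finrank_initialForms hx h
  have hupper := finrank_range_le_card (R := ResidueField R) fun i => map (residue R) (F i)
  rw [Fintype.card_fin] at hupper
  have := FiniteDimensional.span_of_finite (ResidueField R)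
    (Set.finite_range fun i => map (residue R) (F i))
  have hli : LinearIndependent (ResidueField R) fun i => map (residue R) (F i) := by
    rw [linearIndependent_iff_card_eq_finrank_span, Fintype.card_fin]
    exact le_antisymm (hlower.trans (Submodule.finrank_mono hforms)) hupper
  refine le_of_map_residue_mem_initialForms hx h hF hli hle fun i => ?_
  rw [Submodule.eq_of_le_of_finrank_le hforms (hupper.trans hlower)]
  exact Submodule.subset_span (Set.mem_range_self i)

lemma isMinimalReduction_specialIdeal (hx : ∀ i, x i ∈ maximalIdeal R) (h : IsRegularFamily x)
    (σ : Equiv.Perm (Fin g)) (c : ℕ → R) (s : ℕ) :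
    IsMinimalReduction (specialIdeal (x ∘ σ) c s) (Ideal.span (Set.range x) ^ (s + 1)) := by
  have hred := isReduction_specialIdeal (x ∘ σ) c s
  rw [← σ.surjective.range_comp x]
  exact isMinimalReduction_span_range (fun i => hx (σ i)) (h.comp_perm hx σ) hred

end Minimality

section CoreAndGamma

open MvPolynomial

lemma exists_ne_zero_mulVec_eq_zero {S ι κ : Type*} [CommRing S] [Nontrivial S] [Fintype ι]
    [Fintype κ] (A : Matrix ι κ S) (hcard : Fintype.card ι < Fintype.card κ) :
    ∃ v ≠ 0, A.mulVec v = 0 := by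
  by_contra! hker
  have hinj : Function.Injective A.mulVecLin :=
    (injective_iff_map_eq_zero _).2 fun v hv => by_contra fun hv0 => hker v hv0 hv
  have hle := LinearMap.finrank_le_finrank_of_injective hinj
  rw [Module.finrank_fintype_fun_eq_card, Module.finrank_fintype_fun_eq_card] at hle
  exact hcard.not_ge hle

variable {R : Type u} [CommRing R] [IsNoetherianRing R] [IsLocalRing R] {g : ℕ} {x : Fin g → R}

lemma mem_span_of_sum_mul_prod_pow_mem (hx : ∀ i, x i ∈ maximalIdeal R) (h : IsRegularFamily x)
    {n : ℕ} {p : exponents g n → R}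
    (hp : ∑ b, p b * ∏ l, x l ^ b.1 l ∈ Ideal.span (Set.range x) ^ (n + 1)) (b : exponents g n) :
    p b ∈ Ideal.span (Set.range x) := by
  classical
  have heval : eval x (∑ b : exponents g n, monomial b.1 (p b)) =
      ∑ b, p b * ∏ l, x l ^ b.1 l := by
    simp only [map_sum, eval_monomial, Finsupp.prod_fintype _ _ fun _ => pow_zero _]
  have hcoeff := coeff_mem_span_of_eval_mem_span_pow_succ hx h
    (isHomogeneous_sum_monomial _ (fun b _ => mem_exponents.1 b.2) p) (heval ▸ hp) b
  simpa only [coeff_sum, coeff_monomial, Subtype.coe_inj, Finset.sum_ite_eq', Finset.mem_univ,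
    if_true] using hcoeff

/-- Modulo `J i`, a form of degree `n` is a multiple of `δ i` by a linear form in its coefficients
over `R ⧸ I`. Fewer such linear forms than monomials have a nontrivial common zero. -/
lemma card_exponents_le_of_iInf_le (hx : ∀ i, x i ∈ maximalIdeal R) (h : IsRegularFamily x)
    {ι : Type*} [Fintype ι] {n : ℕ} {J : ι → Ideal R} {δ : ι → R}
    (hJ : ∀ i, Ideal.span (Set.range x) ^ (n + 1) ≤ J i)
    (hδ : ∀ i, δ i ∈ Ideal.span (Set.range x) ^ n)
    (hsup : ∀ i, Ideal.span (Set.range x) ^ n ≤ J i ⊔ Ideal.span {δ i})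
    (hinf : ⨅ i, J i ≤ Ideal.span (Set.range x) ^ (n + 1)) :
    (exponents g n).card ≤ Fintype.card ι := by
  by_contra! hlt
  have : Nontrivial (R ⧸ Ideal.span (Set.range x)) := Ideal.Quotient.nontrivial_iff.2
    (ne_top_of_le_ne_top Ideal.IsPrime.ne_top' (span_range_le_maximalIdeal hx))
  have hmultiple (i) (b : exponents g n) : ∃ α : R, ∏ l, x l ^ b.1 l - α * δ i ∈ J i := by
    obtain ⟨y, hy, z, hz, hyz⟩ :=
      Submodule.mem_sup.1 (hsup i (prod_pow_mem_span_pow x (mem_exponents.1 b.2)))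
    obtain ⟨α, rfl⟩ := Ideal.mem_span_singleton'.1 hz
    exact ⟨α, by rwa [← hyz, add_sub_cancel_right]⟩
  choose α hα using hmultiple
  obtain ⟨v, hv0, hv⟩ := exists_ne_zero_mulVec_eq_zero
    (Matrix.of fun i b => Ideal.Quotient.mk (Ideal.span (Set.range x)) (α i b))
    (by rwa [Fintype.card_coe])
  obtain ⟨p, rfl⟩ := Ideal.Quotient.mk_surjective.comp_left v
  have hker (i) : ∑ b, α i b * p b ∈ Ideal.span (Set.range x) := by
    rw [← Ideal.Quotient.eq_zero_iff_mem, map_sum]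
    simp only [map_mul]
    exact congrFun hv i
  refine hv0 (funext fun b => Ideal.Quotient.eq_zero_iff_mem.2
    (mem_span_of_sum_mul_prod_pow_mem hx h (hinf (Ideal.mem_iInf.2 fun i => ?_)) b))
  have hdiff : ∑ b, p b * (∏ l, x l ^ b.1 l - α i b * δ i) ∈ J i :=
    Ideal.sum_mem _ fun b _ => Ideal.mul_mem_left _ _ (hα i b)
  have hlinear : (∑ b, α i b * p b) * δ i ∈ J i :=
    hJ i (pow_succ' (Ideal.span (Set.range x)) n ▸ Ideal.mul_mem_mul (hker i) (hδ i))
  convert Ideal.add_mem _ hdiff hlinear using 1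
  rw [Finset.sum_mul, ← Finset.sum_add_distrib]
  exact Finset.sum_congr rfl fun b _ => by ring

variable [Infinite (ResidueField R)]

lemma core_span_pow (hg : 1 ≤ g) (hx : ∀ i, x i ∈ maximalIdeal R) (h : IsRegularFamily x)
    (s : ℕ) :
    core (Ideal.span (Set.range x) ^ (s + 1)) = Ideal.span (Set.range x) ^ (g * s + 1) := by
  obtain ⟨q, hq⟩ := exists_iInf_specialIdeal_le hg h hx s
  refine le_antisymm ((le_iInf fun i => ?_).trans hq)
    (le_sInf fun J hJ => hJ.1.span_pow_le hg hx h)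
  exact sInf_le (isMinimalReduction_specialIdeal hx h _ _ s)

lemma gamma_span_pow_le (hg : 1 ≤ g) (hx : ∀ i, x i ∈ maximalIdeal R) (h : IsRegularFamily x)
    (s : ℕ) : gamma (Ideal.span (Set.range x) ^ (s + 1)) ≤ (exponents g (g * s)).card := by
  obtain ⟨q, hq⟩ := exists_iInf_specialIdeal_le hg h hx s
  let e := (exponents g (g * s)).equivFin
  refine sInf_le ⟨_, rfl, fun i => specialIdeal (x ∘ (q (e.symm i)).1) (q (e.symm i)).2 s,
    fun i => isMinimalReduction_specialIdeal hx h _ _ s, ?_⟩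
  rw [e.symm.iInf_comp (g := fun i => specialIdeal (x ∘ (q i).1) (q i).2 s)]
  refine le_antisymm (le_iInf fun i => sInf_le ?_) ((core_span_pow hg hx h s).symm ▸ hq)
  exact isMinimalReduction_specialIdeal hx h _ _ s

lemma le_gamma_span_pow (hg : 1 ≤ g) (hx : ∀ i, x i ∈ maximalIdeal R) (h : IsRegularFamily x)
    (s : ℕ) : ((exponents g (g * s)).card : ℕ∞) ≤ gamma (Ideal.span (Set.range x) ^ (s + 1)) := by
  refine le_sInf ?_
  rintro _ ⟨t, rfl, J, hJ, hcore⟩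
  rw [core_span_pow hg hx h] at hcore
  choose δ hδ hsup using fun i => (hJ i).1.exists_span_pow_le_sup hg hx h
  have hcard := card_exponents_le_of_iInf_le hx h (fun i => (hJ i).1.span_pow_le hg hx h) hδ hsup
    hcore.ge
  rw [Fintype.card_fin] at hcard
  exact_mod_cast hcard

lemma gamma_span_pow (hg : 1 ≤ g) (hx : ∀ i, x i ∈ maximalIdeal R) (h : IsRegularFamily x)
    (s : ℕ) : gamma (Ideal.span (Set.range x) ^ (s + 1)) =
      ((g - 1 + g * s).choose (g - 1) : ℕ) := by
  rw [← card_exponents hg]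
  exact le_antisymm (gamma_span_pow_le hg hx h s) (le_gamma_span_pow hg hx h s)

end CoreAndGamma

section Height

open RingTheory.Sequence

variable {R : Type u} [CommRing R]

lemma ofList_ne_top {rs : List R} (h : IsRegular R rs) : Ideal.ofList rs ≠ ⊤ :=
  fun htop => h.top_ne_smul (by rw [htop, Submodule.top_smul])

variable [IsNoetherianRing R]

lemma ht_ofList_le_length {rs : List R} (h : Ideal.ofList rs ≠ ⊤) :
    ht (Ideal.ofList rs) ≤ (rs.length : WithBot ℕ∞) := by
  classical
  obtain ⟨p, hp⟩ := Ideal.nonempty_minimalPrimes h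
  have := hp.1.1
  refine (iInf₂_le (⟨p, hp.1.1⟩ : PrimeSpectrum R) hp.1.2).trans ?_
  rw [rDim, IsLocalization.AtPrime.ringKrullDim_eq_height p]
  have hspan : Ideal.ofList rs = Ideal.span (rs.toFinset : Set R) := by
    rw [Ideal.ofList, List.coe_toFinset]
  have hheight := Ideal.height_le_card_of_mem_minimalPrimes_span rs.toFinset.finite_toSet
    (hspan ▸ hp)
  rw [Set.ncard_coe_finset] at hheight
  exact_mod_cast hheight.trans (by exact_mod_cast List.toFinset_card_le rs)

/-- A regular sequence stays regular in the localization at a prime containing it, where its length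
is the difference of two Krull dimensions. -/
lemma length_le_ht_ofList {rs : List R} (h : IsWeaklyRegular R rs) :
    (rs.length : WithBot ℕ∞) ≤ ht (Ideal.ofList rs) := by
  refine le_iInf₂ fun p hp => ?_
  have hreg := h.isRegular_of_isLocalization_of_mem
    (Localization.AtPrime p.asIdeal) p.asIdeal fun r hr => hp (Ideal.subset_span hr)
  have : IsNoetherianRing (Localization.AtPrime p.asIdeal) :=
    IsLocalization.isNoetherianRing p.asIdeal.primeCompl _ inferInstance
  have := Ideal.Quotient.nontrivial_iff.2 (ofList_ne_top hreg)
  rw [rDim, ← ringKrullDim_add_length_eq_ringKrullDim_of_isRegular _ hreg, List.length_map]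
  exact le_add_of_nonneg_left ringKrullDim_nonneg_of_nontrivial

lemma ht_ofList_eq_length {rs : List R} (h : IsRegular R rs) :
    ht (Ideal.ofList rs) = (rs.length : WithBot ℕ∞) :=
  (ht_ofList_le_length (ofList_ne_top h)).antisymm (length_le_ht_ofList h.toIsWeaklyRegular)

end Height

theorem statement17_general {R : Type u} [CommRing R] [IsNoetherianRing R] [IsLocalRing R]
    [Infinite (ResidueField R)] (I : Ideal R) (g : ℕ) (hg1 : 1 ≤ g) (hht : ht I = (g : WithBot ℕ∞))
    (hreg : ∃ rs : List R, RingTheory.Sequence.IsRegular R rs ∧ Ideal.ofList rs = I)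
    (j : ℕ) (hj : 1 ≤ j) :
    core (I ^ j) = I ^ (g * j - g + 1) ∧
      gamma (I ^ j) = ((Nat.choose (g * j - 1) (g - 1) : ℕ) : ℕ∞) := by
  obtain ⟨rs, hrs, rfl⟩ := hreg
  obtain rfl : rs.length = g := by exact_mod_cast (ht_ofList_eq_length hrs).symm.trans hht
  obtain ⟨s, rfl⟩ := Nat.exists_eq_add_of_le' hj
  have hx : ∀ i, rs.get i ∈ maximalIdeal R := fun i =>
    le_maximalIdeal (ofList_ne_top hrs) (Ideal.subset_span (List.get_mem rs i))
  have hfam : IsRegularFamily rs.get := by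
    rw [IsRegularFamily, List.ofFn_get]
    exact hrs.toIsWeaklyRegular
  have hspan : Ideal.ofList rs = Ideal.span (Set.range rs.get) := by
    rw [Ideal.ofList, Set.range_list_get]
  have hpow : rs.length * (s + 1) - rs.length + 1 = rs.length * s + 1 := by
    rw [Nat.mul_succ, Nat.add_sub_cancel]
  have hchoose : rs.length * (s + 1) - 1 = rs.length - 1 + rs.length * s := by
    rw [Nat.mul_succ]
    omega
  rw [hspan, hpow, hchoose]
  exact ⟨core_span_pow hg1 hx hfam s, gamma_span_pow hg1 hx hfam s⟩

/-- Proposition 4.2: for an ideal of height `g ≥ 1` generated by a regular sequence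
in a Noetherian local ring with infinite residue field, `core(I^j) = I^{gj-g+1}`,
and if `R` is Gorenstein then `γ(I^j) = C(gj-1, g-1)`. -/
theorem statement17 {R : Type u} [CommRing R] [IsNoetherianRing R] [IsLocalRing R]
    (hres : Infinite (ResidueField R))
    (I : Ideal R) (g : ℕ) (hg1 : 1 ≤ g) (hht : ht I = (g : WithBot ℕ∞))
    (hreg : ∃ rs : List R, RingTheory.Sequence.IsRegular R rs ∧ Ideal.ofList rs = I)
    (j : ℕ) (hj : 1 ≤ j) :
    core (I ^ j) = I ^ (g * j - g + 1) ∧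
    (IsGorensteinLocalRing R →
      gamma (I ^ j) = ((Nat.choose (g * j - 1) (g - 1) : ℕ) : ℕ∞)) := by
  let ⟨hcore, hgamma⟩ := statement17_general I g hg1 hht hreg j hj
  exact ⟨hcore, fun _ => hgamma⟩

end CPU
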